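/- arXiv:1804.02308 — 16 statements merged into one kernel-verified Lean document; each statement's English description precedes it below -/
import Mathlib

section
/- Assume a ≥ b ≥ 2. Then for every integer j ≥ 0 one has b·γ_j < η_j < b·γ_{j+1} and a·γ_j < η_j < a·γ_{j+1} (so 0 = b·γ_0 < η_0 < b·γ_1 < η_1 < b·γ_2 < ⋯, and likewise with a in place of b). Moreover the gaps between consecutive terms are nondecreasing: for every j ≥ 0, η_{j+1} − b·γ_{j+1} ≥ b·γ_{j+1} − η_j ≥ η_j − b·γ_j and η_{j+1} − a·γ_{j+1} ≥ a·γ_{j+1} − η_j ≥ η_j − a·γ_j. -/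
/-!
The statements for `a` and for `b` are both instances of one about a multiplier `c` with `2 ≤ c` and
`2 * c ≤ a * b`. The differences of consecutive gaps are multiples of the terms themselves:
`(c * γ (j + 1) - η j) - (η j - c * γ j) = (c - 2) * η j` and
`(η (j + 1) - c * γ (j + 1)) - (c * γ (j + 1) - η j) = (a * b - 2 * c) * γ (j + 1)`.
So, as long as `γ` and `η` are nonnegative, the gaps are nondecreasing; the first one is `1`, hence
all gaps are positive. Induction carries `0 ≤ γ j` and `c * γ j < η j`, which imply
`0 < η j` and `0 ≤ γ (j + 1) = η j - γ j`.
-/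

/-- One step of the induction, for consecutive terms `x = γ j`, `y = η j`, `x' = γ (j + 1)`,
`y' = η (j + 1)`, with `m = a * b`. -/
theorem gap_step {m c x y x' y' : ℤ} (hc : 2 ≤ c) (hm : 2 * c ≤ m)
    (hx' : x' = y - x) (hy' : y' = m * x' - y) (hx : 0 ≤ x) (hxy : c * x < y) :
    y < c * x' ∧ 0 ≤ x' ∧ c * x' < y' ∧
      y' - c * x' ≥ c * x' - y ∧ c * x' - y ≥ y - c * x := by
  have hle : x ≤ c * x := by nlinarith
  have hx'0 : 0 ≤ x' := by linarith
  have h1 : 0 ≤ (c - 2) * y := mul_nonneg (by linarith) (by linarith)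
  have h2 : 0 ≤ (m - 2 * c) * x' := mul_nonneg (by linarith) hx'0
  have e1 : (c * x' - y) - (y - c * x) = (c - 2) * y := by rw [hx']; ring
  have e2 : (y' - c * x') - (c * x' - y) = (m - 2 * c) * x' := by rw [hy']; ring
  exact ⟨by linarith, hx'0, by linarith, by linarith, by linarith⟩

theorem gaps {m c : ℤ} (hc : 2 ≤ c) (hm : 2 * c ≤ m)
    {γ η : ℤ → ℤ} (hγ0 : γ 0 = 0) (hη0 : η 0 = 1)
    (hγ : ∀ j : ℤ, γ j = η (j - 1) - γ (j - 1))
    (hη : ∀ j : ℤ, η j = m * γ j - η (j - 1)) (j : ℤ) (hj : 0 ≤ j) :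
    (c * γ j < η j ∧ η j < c * γ (j + 1)) ∧
      η (j + 1) - c * γ (j + 1) ≥ c * γ (j + 1) - η j ∧
      c * γ (j + 1) - η j ≥ η j - c * γ j := by
  have hγs (k : ℤ) : γ (k + 1) = η k - γ k := by simpa using hγ (k + 1)
  have hηs (k : ℤ) : η (k + 1) = m * γ (k + 1) - η k := by simpa using hη (k + 1)
  have inv : 0 ≤ γ j ∧ c * γ j < η j := by
    induction j, hj using Int.le_induction with
    | base => simp [hγ0, hη0]
    | succ k _ ih =>
      obtain ⟨-, h1, h2, -⟩ := gap_step hc hm (hγs k) (hηs k) ih.1 ih.2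
      exact ⟨h1, h2⟩
  obtain ⟨h1, -, -, h2⟩ := gap_step hc hm (hγs j) (hηs j) inv.1 inv.2
  exact ⟨⟨inv.2, h1⟩, h2⟩

/-- For `a ≥ b ≥ 2`: the interleaving inequalities `b*γ j < η j < b*γ (j+1)` and
`a*γ j < η j < a*γ (j+1)` for `j ≥ 0`, and the gaps between consecutive terms are
nondecreasing. -/
theorem stmt2 (a b : ℤ) (hba : b ≤ a) (hb2 : 2 ≤ b) (hab : 4 ≤ a * b)
    (γ η : ℤ → ℤ) (hγ0 : γ 0 = 0) (hη0 : η 0 = 1)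
    (hγ : ∀ j : ℤ, γ j = η (j - 1) - γ (j - 1))
    (hη : ∀ j : ℤ, η j = a * b * γ j - η (j - 1)) :
    (∀ j : ℤ, 0 ≤ j → b * γ j < η j ∧ η j < b * γ (j + 1)) ∧
    (∀ j : ℤ, 0 ≤ j → a * γ j < η j ∧ η j < a * γ (j + 1)) ∧
    (∀ j : ℤ, 0 ≤ j →
      η (j + 1) - b * γ (j + 1) ≥ b * γ (j + 1) - η j ∧
      b * γ (j + 1) - η j ≥ η j - b * γ j) ∧
    (∀ j : ℤ, 0 ≤ j →
      η (j + 1) - a * γ (j + 1) ≥ a * γ (j + 1) - η j ∧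
      a * γ (j + 1) - η j ≥ η j - a * γ j) := by
  have hB := gaps hb2 (show 2 * b ≤ a * b by nlinarith) hγ0 hη0 hγ hη
  have hA := gaps (hb2.trans hba) (show 2 * a ≤ a * b by nlinarith) hγ0 hη0 hγ hη
  exact ⟨fun j hj => (hB j hj).1, fun j hj => (hA j hj).1,
    fun j hj => (hB j hj).2, fun j hj => (hA j hj).2⟩
end

section
/- Assume a ≥ b ≥ 2. If α and β are real roots of H(a,b) (i.e. α, β ∈ Δ^re), then α + β is not a real root (α + β ∉ Δ^re). -/
/-!
The recursion gives `η j + η (j - 1) = a * b * γ j`, so every `η j` is `±1` modulo `a * b`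
(`isUnitMod_of_add_dvd`). Hence every real root `(x, y)` is either *long*, with `x ≡ ±1` mod `a * b`
and `a ∣ y`, or *short*, with `b ∣ x` and `y ≡ ±1` mod `a * b`. Now only congruences matter:

* a sum of two long roots has `a ∣ y`, so it is not short as `a ≥ 2`; and its first coordinate is
  `0` or `±2` mod `a * b`, which is not `±1` as `a * b ≥ 4`, so it is not long. Two short roots
  behave symmetrically;
* a sum of a long and a short root has `x ≡ ±1` mod `b` and `y ≡ ±1` mod `a`, so it is neither
  short nor long.
-/

/-- `x` is congruent to `1` or `-1` modulo `n`. -/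
def IsUnitMod (n x : ℤ) : Prop := n ∣ x - 1 ∨ n ∣ x + 1

theorem IsUnitMod.of_dvd {d n x : ℤ} (hd : d ∣ n) (h : IsUnitMod n x) : IsUnitMod d x :=
  h.imp hd.trans hd.trans

theorem IsUnitMod.not_dvd {d x : ℤ} (hd : 2 ≤ d) (h : IsUnitMod d x) : ¬ d ∣ x := by
  intro hx
  have h1 : d ∣ 1 := by
    rcases h with h | h
    · simpa using dvd_sub hx h
    · simpa using dvd_sub h hx
  have := Int.le_of_dvd one_pos h1
  omega

/-- Modulo `n ≥ 4`, no signed sum `±1 ± 1 ± 1` vanishes. -/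
theorem IsUnitMod.not_add {n x y : ℤ} (hn : 4 ≤ n) (hx : IsUnitMod n x) (hy : IsUnitMod n y) :
    ¬ IsUnitMod n (x + y) := by
  intro hxy
  have key : n ∣ 1 ∨ n ∣ 3 := by
    rcases hx with ⟨p, hp⟩ | ⟨p, hp⟩ <;> rcases hy with ⟨q, hq⟩ | ⟨q, hq⟩ <;>
      rcases hxy with ⟨r, hr⟩ | ⟨r, hr⟩
    · exact .inl ⟨r - p - q, by linear_combination hr - hp - hq⟩
    · exact .inr ⟨r - p - q, by linear_combination hr - hp - hq⟩
    · exact .inl ⟨p + q - r, by linear_combination hp + hq - hr⟩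
    · exact .inl ⟨r - p - q, by linear_combination hr - hp - hq⟩
    · exact .inl ⟨p + q - r, by linear_combination hp + hq - hr⟩
    · exact .inl ⟨r - p - q, by linear_combination hr - hp - hq⟩
    · exact .inr ⟨p + q - r, by linear_combination hp + hq - hr⟩
    · exact .inl ⟨p + q - r, by linear_combination hp + hq - hr⟩
  rcases key with h | h <;> have := Int.le_of_dvd (by norm_num) h <;> omega

theorem IsUnitMod.of_add_dvd {n x y : ℤ} (h : n ∣ x + y) (hx : IsUnitMod n x) :
    IsUnitMod n y := by
  rcases hx with hx | hx
  · exact .inr ((dvd_add_right hx).1 (by rwa [show x - 1 + (y + 1) = x + y by ring]))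
  · exact .inl ((dvd_add_right hx).1 (by rwa [show x + 1 + (y - 1) = x + y by ring]))

theorem isUnitMod_of_add_dvd {n : ℤ} {η : ℤ → ℤ} (h0 : η 0 = 1)
    (h : ∀ j, n ∣ η j + η (j - 1)) (j : ℤ) : IsUnitMod n (η j) := by
  induction j using Int.induction_on with
  | zero => exact .inl (by simp [h0])
  | succ i ih =>
    refine ih.of_add_dvd ?_
    simpa [add_comm] using h (i + 1)
  | pred i ih => exact ih.of_add_dvd (h _)

/-- If `a ≥ b ≥ 2`, then the sum of two real roots of `H(a,b)` is never a real root. -/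
theorem stmt3 (a b : ℤ) (hba : b ≤ a) (hb2 : 2 ≤ b) (hab : 4 ≤ a * b)
    (γ η : ℤ → ℤ) (hγ0 : γ 0 = 0) (hη0 : η 0 = 1)
    (hγ : ∀ j : ℤ, γ j = η (j - 1) - γ (j - 1))
    (hη : ∀ j : ℤ, η j = a * b * γ j - η (j - 1))
    (αLL αLU αSU αSL : ℤ → ℤ × ℤ)
    (hLL : ∀ j : ℤ, αLL j = (η j, a * γ j))
    (hLU : ∀ j : ℤ, αLU j = (η j, a * γ (j + 1)))
    (hSU : ∀ j : ℤ, αSU j = (b * γ j, η j))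
    (hSL : ∀ j : ℤ, αSL j = (b * γ (j + 1), η j))
    (Δre : Set (ℤ × ℤ))
    (hΔre : Δre = {v | ∃ j : ℤ, v = αLL j ∨ v = αLU j ∨ v = αSU j ∨ v = αSL j})
    (α β : ℤ × ℤ) (hα : α ∈ Δre) (hβ : β ∈ Δre) :
    α + β ∉ Δre := by
  have hU : ∀ j, IsUnitMod (a * b) (η j) :=
    isUnitMod_of_add_dvd hη0 fun j => ⟨γ j, by linear_combination hη j⟩
  have hroot : ∀ v ∈ Δre, (IsUnitMod (a * b) v.1 ∧ a ∣ v.2) ∨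
      (b ∣ v.1 ∧ IsUnitMod (a * b) v.2) := by
    intro v hv
    rw [hΔre] at hv
    obtain ⟨j, rfl | rfl | rfl | rfl⟩ := hv
    · rw [hLL]; exact .inl ⟨hU j, dvd_mul_right _ _⟩
    · rw [hLU]; exact .inl ⟨hU j, dvd_mul_right _ _⟩
    · rw [hSU]; exact .inr ⟨dvd_mul_right _ _, hU j⟩
    · rw [hSL]; exact .inr ⟨dvd_mul_right _ _, hU j⟩
  have hndA : ∀ {x : ℤ}, IsUnitMod (a * b) x → ¬ a ∣ x := fun h =>
    (h.of_dvd (dvd_mul_right a b)).not_dvd (hb2.trans hba)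
  have hndB : ∀ {x : ℤ}, IsUnitMod (a * b) x → ¬ b ∣ x := fun h =>
    (h.of_dvd (dvd_mul_left b a)).not_dvd hb2
  intro hs
  have hs' := hroot _ hs
  rw [Prod.fst_add, Prod.snd_add] at hs'
  rcases hroot α hα with ⟨hα1, hα2⟩ | ⟨hα1, hα2⟩ <;>
    rcases hroot β hβ with ⟨hβ1, hβ2⟩ | ⟨hβ1, hβ2⟩ <;>
    rcases hs' with ⟨hs1, hs2⟩ | ⟨hs1, hs2⟩
  · exact hα1.not_add hab hβ1 hs1
  · exact hndA hs2 (dvd_add hα2 hβ2)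
  · exact hndA hβ2 ((dvd_add_right hα2).1 hs2)
  · exact hndB hα1 ((dvd_add_left hβ1).1 hs1)
  · exact hndA hα2 ((dvd_add_left hβ2).1 hs2)
  · exact hndB hβ1 ((dvd_add_right hα1).1 hs1)
  · exact hndB hs1 (dvd_add hα1 hβ1)
  · exact hα2.not_add hab hβ2 hs2
end

section
/- Assume ab ≥ 5. Define the real numbers ψ₊ = ((ab − 2) + √(ab·(ab − 4)))/2, λ = ψ₊/(ψ₊ − 1), and μ = 1/√(ab·(ab − 4)). Then ψ₊ > 2.61, 1 < λ < 1.62, 0 < μ < 0.45, and for every integer j ≥ 0: λ·ψ₊^j − 1.62 < η_j < λ·ψ₊^j and μ·ψ₊^j − 0.45 < γ_j < μ·ψ₊^j. -/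
/-!
Write `t = ψ₊` and `s = √(ab(ab - 4))`. Then `t` is the larger root of `t² - (ab - 2)t + 1 = 0`,
so `ab · t = (t + 1)²` and `s · t = t² - 1`. Solving the recurrence gives the closed forms
`η j = (t · tʲ - t⁻ʲ) / (t - 1)` and `γ j = (tʲ - t⁻ʲ) · t / (t² - 1)`
(`closed_forms`). Hence `λ tʲ - η j = (λ - 1) t⁻ʲ` and `μ tʲ - γ j = μ t⁻ʲ`; since `t > 1`, these
errors lie in `(0, λ - 1]` and `(0, μ]`. The numerical bounds follow from `s ≥ √5`.
-/

/-- Binet-type formulas for the two sequences; `n` stands for `ab`. -/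
lemma closed_forms (n : ℤ) (γ η : ℤ → ℤ) (hγ0 : γ 0 = 0) (hη0 : η 0 = 1)
    (hγ : ∀ j : ℤ, γ j = η (j - 1) - γ (j - 1))
    (hη : ∀ j : ℤ, η j = n * γ j - η (j - 1))
    (t : ℝ) (ht : 1 < t) (hn : (n : ℝ) * t = (t + 1) ^ 2) (j : ℕ) :
    (η j : ℝ) = (t * t ^ j - (t ^ j)⁻¹) / (t - 1) ∧
    (γ j : ℝ) = (t ^ j - (t ^ j)⁻¹) * t / (t ^ 2 - 1) := by
  have h0 : t ≠ 0 := by positivity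
  have h1 : t - 1 ≠ 0 := by linarith
  have h2 : t ^ 2 - 1 ≠ 0 := by nlinarith
  have hn' : (n : ℝ) = (t + 1) ^ 2 / t := by
    field_simp
    exact hn
  induction j with
  | zero => simp [hγ0, hη0, div_self h1]
  | succ k ih =>
    obtain ⟨ihη, ihγ⟩ := ih
    have e : ((k + 1 : ℕ) : ℤ) - 1 = k := by push_cast; ring
    have gs : (γ (k + 1 : ℕ) : ℝ)
        = (t ^ (k + 1) - (t ^ (k + 1))⁻¹) * t / (t ^ 2 - 1) := by
      rw [hγ, e]
      push_cast
      rw [ihη, ihγ, pow_succ t k]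
      field_simp
      ring
    refine ⟨?_, gs⟩
    rw [hη, e]
    push_cast at gs ⊢
    rw [gs, ihη, hn', pow_succ t k]
    field_simp
    ring

/-- If `a*b ≥ 5`, then `ψ₊ > 2.61`, `1 < λ < 1.62`, `0 < μ < 0.45`, and for every `j ≥ 0`,
`λ·ψ₊^j - 1.62 < η j < λ·ψ₊^j` and `μ·ψ₊^j - 0.45 < γ j < μ·ψ₊^j`. -/
theorem stmt5 (a b : ℤ) (hba : b ≤ a) (hb1 : 1 ≤ b) (hab : 5 ≤ a * b)
    (γ η : ℤ → ℤ) (hγ0 : γ 0 = 0) (hη0 : η 0 = 1)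
    (hγ : ∀ j : ℤ, γ j = η (j - 1) - γ (j - 1))
    (hη : ∀ j : ℤ, η j = a * b * γ j - η (j - 1))
    (ψp lam μ : ℝ)
    (hψp : ψp = (((a * b : ℤ) : ℝ) - 2 + Real.sqrt (((a * b : ℤ) : ℝ) * (((a * b : ℤ) : ℝ) - 4))) / 2)
    (hlam : lam = ψp / (ψp - 1))
    (hμ : μ = 1 / Real.sqrt (((a * b : ℤ) : ℝ) * (((a * b : ℤ) : ℝ) - 4))) :
    ψp > 2.61 ∧ 1 < lam ∧ lam < 1.62 ∧ 0 < μ ∧ μ < 0.45 ∧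
    (∀ j : ℕ, lam * ψp ^ j - 1.62 < ((η j : ℤ) : ℝ) ∧ ((η j : ℤ) : ℝ) < lam * ψp ^ j) ∧
    (∀ j : ℕ, μ * ψp ^ j - 0.45 < ((γ j : ℤ) : ℝ) ∧ ((γ j : ℤ) : ℝ) < μ * ψp ^ j) := by
  have hn5 : (5 : ℝ) ≤ ((a * b : ℤ) : ℝ) := by exact_mod_cast hab
  generalize hN : ((a * b : ℤ) : ℝ) = N at *
  have hpos : 0 ≤ N * (N - 4) := by nlinarith
  have hsq := Real.sq_sqrt hpos
  have hs : 2.23 < Real.sqrt (N * (N - 4)) := by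
    apply Real.lt_sqrt_of_sq_lt
    nlinarith
  generalize Real.sqrt (N * (N - 4)) = s at *
  have ht : 2.615 ≤ ψp := by linarith
  have hnt : N * ψp = (ψp + 1) ^ 2 := by
    subst hψp
    nlinarith
  have hst : s * ψp = ψp ^ 2 - 1 := by
    subst hψp
    nlinarith
  have ht1 : 0 < ψp - 1 := by linarith
  have h2 : 0 < ψp ^ 2 - 1 := by nlinarith
  have hl1 : lam = 1 + 1 / (ψp - 1) := by
    rw [hlam]
    field_simp
    ring
  have hi : 1 / (ψp - 1) < 0.62 := by
    rw [div_lt_iff₀ ht1]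
    linarith
  have hi0 : 0 < 1 / (ψp - 1) := by positivity
  have hμ0 : 0 < μ := by
    rw [hμ]
    exact one_div_pos.mpr (by linarith)
  have hμ1 : μ < 0.45 := by
    rw [hμ, div_lt_iff₀ (by linarith)]
    linarith
  have hμt : μ = ψp / (ψp ^ 2 - 1) := by
    have : s ≠ 0 := by linarith
    rw [hμ, ← hst]
    field_simp
  have cf := closed_forms (a * b) γ η hγ0 hη0 hγ hη ψp (by linarith) (by rw [hN]; exact hnt)
  have hq (j : ℕ) : 0 < (ψp ^ j)⁻¹ ∧ (ψp ^ j)⁻¹ ≤ 1 :=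
    ⟨by positivity, inv_le_one_of_one_le₀ (one_le_pow₀ (by linarith))⟩
  refine ⟨by linarith, by linarith, by linarith, hμ0, hμ1, fun j => ?_, fun j => ?_⟩
  · have hj : (η j : ℝ) = lam * ψp ^ j - 1 / (ψp - 1) * (ψp ^ j)⁻¹ := by
      rw [(cf j).1, hlam]
      ring
    obtain ⟨q0, q1⟩ := hq j
    rw [hj]
    constructor <;> nlinarith
  · have hj : (γ j : ℝ) = μ * ψp ^ j - μ * (ψp ^ j)⁻¹ := by
      rw [(cf j).2, hμt]
      ring
    obtain ⟨q0, q1⟩ := hq j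
    rw [hj]
    constructor <;> nlinarith
end

section
/- Assume b = 1 and a ≥ 5. Then 0 = γ_0 < η_0 = γ_1 < γ_2, and for every integer j ≥ 1 one has γ_{j+1} < η_j < γ_{j+2} (giving the chain 0 = γ_0 < η_0 = γ_1 < γ_2 < η_1 < γ_3 < η_2 < ⋯). Moreover 0 < η_0 < η_1, and for every integer j ≥ 1 one has η_j < a·γ_j < η_{j+1} (giving the chain 0 < η_0 < η_1 < a·γ_1 < η_2 < a·γ_2 < η_3 < ⋯). -/
/-!
The recursion for `γ` says that `η j = γ (j + 1) + γ j`. Substituting this into that for `η`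
with `b = 1` gives `γ (j + 2) = (a - 2) γ (j + 1) - γ j`, where `γ 0 = 0` and `γ 1 = 1`. Since
`a - 2 ≥ 3`, `γ` at least doubles at each step from `j = 0` on (`gamma_doubles`). Rewritten in
terms of `γ`, the inequalities to be proved are
`0 < γ j`, `2 γ j < (a - 3) γ (j + 1)`, `0 < η (j - 1) = γ j + γ (j - 1)` and
`(a + 1) γ j < (a - 1) γ (j + 1)`; all of them follow from this doubling and `a ≥ 5`.
-/

/-- A solution of `g (j + 2) = (a - 2) g (j + 1) - g j` starting with `0, 1` at least doubles at
each step: if `g j ≤ g (j + 1)` and `0 ≤ g (j + 1)`, then `g (j + 2) ≥ 3 g (j + 1) - g (j + 1)`. -/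
theorem gamma_doubles {a : ℤ} (ha : 5 ≤ a) {g : ℤ → ℤ} (h0 : g 0 = 0) (h1 : g 1 = 1)
    (hg : ∀ j : ℤ, g (j + 2) = (a - 2) * g (j + 1) - g j) {j : ℤ} (hj : 0 ≤ j) :
    0 ≤ g j ∧ 0 < g (j + 1) ∧ 2 * g j ≤ g (j + 1) := by
  induction j, hj using Int.leInduction with
  | base => simp [h0, h1]
  | succ k _ ih =>
    obtain ⟨hk, hk1, hk2⟩ := ih
    have hrec := hg k
    rw [show k + 1 + 1 = k + 2 by ring]
    have : 0 ≤ (a - 5) * g (k + 1) := mul_nonneg (by linarith) hk1.le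
    refine ⟨hk1.le, ?_, ?_⟩ <;> linarith

/-- For `b = 1` and `a ≥ 5`: `0 = γ 0 < η 0 = γ 1 < γ 2`, and `γ (j+1) < η j < γ (j+2)`
for `j ≥ 1`; moreover `0 < η 0 < η 1` and `η j < a * γ j < η (j+1)` for `j ≥ 1`. -/
theorem stmt6 (a b : ℤ) (hb : b = 1) (ha : 5 ≤ a)
    (γ η : ℤ → ℤ) (hγ0 : γ 0 = 0) (hη0 : η 0 = 1)
    (hγ : ∀ j : ℤ, γ j = η (j - 1) - γ (j - 1))
    (hη : ∀ j : ℤ, η j = a * b * γ j - η (j - 1)) :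
    (0 : ℤ) = γ 0 ∧ γ 0 < η 0 ∧ η 0 = γ 1 ∧ γ 1 < γ 2 ∧
    (∀ j : ℤ, 1 ≤ j → γ (j + 1) < η j ∧ η j < γ (j + 2)) ∧
    (0 : ℤ) < η 0 ∧ η 0 < η 1 ∧
    (∀ j : ℤ, 1 ≤ j → η j < a * γ j ∧ a * γ j < η (j + 1)) := by
  subst hb
  have hη' : ∀ j : ℤ, η j = γ (j + 1) + γ j := fun j => by
    have h := hγ (j + 1)
    rw [add_sub_cancel_right] at h
    linarith
  have hrec : ∀ j : ℤ, γ (j + 2) = (a - 2) * γ (j + 1) - γ j := fun j => by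
    have h := hη (j + 1)
    rw [add_sub_cancel_right, hη' (j + 1), hη' j, show j + 1 + 1 = j + 2 by ring] at h
    linarith
  have h1 : γ 1 = 1 := by
    have h := hη' 0
    rw [zero_add] at h
    linarith
  have h2 : γ 2 = a - 2 := by simpa [hγ0, h1] using hrec 0
  have hη1 : η 1 = a - 1 := by
    have h := hη' 1
    norm_num [h1, h2] at h
    linarith
  refine ⟨hγ0.symm, by linarith, by linarith, by linarith, fun j hj => ?_, by linarith,
    by linarith, fun j hj => ?_⟩
  all_goals
    -- Doubling at `j - 1` and at `j`; the former gives `0 < γ j` and `0 < η (j - 1)`.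
    obtain ⟨hp, hpos, -⟩ := gamma_doubles ha hγ0 h1 hrec (j := j - 1) (by linarith)
    obtain ⟨-, hpos1, hdbl⟩ := gamma_doubles ha hγ0 h1 hrec (j := j) (by linarith)
    have hprev := hη' (j - 1)
    rw [sub_add_cancel] at hpos hprev
    have hr := hrec j
    have hj0 := hη' j
  · have : 0 ≤ (a - 5) * γ (j + 1) := mul_nonneg (by linarith) hpos1.le
    constructor <;> linarith
  · have hj1 := hη' (j + 1)
    rw [show j + 1 + 1 = j + 2 by ring] at hj1
    have hstep := hη j
    have : 0 ≤ (a - 1) * (γ (j + 1) - 2 * γ j) := mul_nonneg (by linarith) (by linarith)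
    have : 0 ≤ (a - 5) * γ j := mul_nonneg (by linarith) hpos.le
    constructor <;> linarith
end

section
/- Assume b = 1 and a ≥ 5, and let β be a positive real root of H(a,1). Writing α1 = (1,0) and α2 = (0,1) for the simple roots, the following hold: (i) β + α1 ∈ Δ^re if and only if β = (0,1); (ii) β − α1 ∈ Δ^re if and only if β = (1,1); (iii) β + α2 ∈ Δ^re if and only if β = (1,0) or β = (1, a−1); (iv) β − α2 ∈ Δ^re if and only if β = (1,1) or β = (1,a). -/
/-!
Every real root lies on one of the level sets `N = 1` or `N = a` of the Weyl-invariant quadratic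
form `N(x, y) = a x² - a x y + y²` (`rootNorm`), because `η j ² - a γ j η j + a γ j ²` does not
depend on `j`. If `v` and `v + α` are both real roots, then `N (v + α) - N v ∈ {0, ±(a - 1)}`,
and the left side is affine-linear in `v`.

* For `α = (1, 0)` the difference is a multiple of `a`, hence zero, so `v = (x, 2 x + 1)` and
  `N v = 1 - (a - 4) x (x + 1)`; as `a ≥ 5`, only `x = 0` and `x = -1` are possible.
* For `α = (0, 1)` one uses `4 N = (2 y - a x)² - a (a - 4) x²`. Difference `0` gives
  `4 N = 1 - a (a - 4) x²`, which is too small; difference `±(a - 1)` forces `x² = 1`.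

This leaves a short list of candidates `v` in each direction. Positive real roots have nonnegative
coordinates, which discards the extraneous candidates; the others are exhibited at `j = 0, 1`.
-/

/-- The Weyl-invariant quadratic form of `H(a,1)`, scaled so that short roots have norm `1` and
long roots norm `a`. -/
def rootNorm (a x y : ℤ) : ℤ := a * x ^ 2 - a * x * y + y ^ 2

theorem invariant_eq_one {a : ℤ} {γ η : ℤ → ℤ} (hγ0 : γ 0 = 0) (hη0 : η 0 = 1)
    (hγ : ∀ j, γ j = η (j - 1) - γ (j - 1)) (hη : ∀ j, η j = a * γ j - η (j - 1)) (j : ℤ) :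
    η j ^ 2 - a * γ j * η j + a * γ j ^ 2 = 1 := by
  have step : ∀ j, η j ^ 2 - a * γ j * η j + a * γ j ^ 2 =
      η (j - 1) ^ 2 - a * γ (j - 1) * η (j - 1) + a * γ (j - 1) ^ 2 := by
    intro j
    rw [hη j, hγ j]
    ring
  induction j using Int.induction_on with
  | zero => simp [hγ0, hη0]
  | succ i ih => rw [step, add_sub_cancel_right, ih]
  | pred i ih => rw [← step, ih]

/-- The inequality `2 γ j ≤ η j` is what makes the sign conditions propagate along the
recursion. -/
theorem nonneg_of_nonneg_index {a : ℤ} (ha : 5 ≤ a) {γ η : ℤ → ℤ} (hγ0 : γ 0 = 0)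
    (hη0 : η 0 = 1) (hγ : ∀ j, γ j = η (j - 1) - γ (j - 1))
    (hη : ∀ j, η j = a * γ j - η (j - 1)) (j : ℤ) (hj : 0 ≤ j) :
    0 ≤ γ j ∧ 1 ≤ η j ∧ 2 * γ j ≤ η j := by
  induction j, hj using Int.leInduction with
  | base => simp [hγ0, hη0]
  | succ j _ ih =>
    obtain ⟨h1, h2, h3⟩ := ih
    have hg := hγ (j + 1)
    have hh := hη (j + 1)
    rw [add_sub_cancel_right] at hg hh
    have hpos : 1 ≤ γ (j + 1) := by omega
    have hmul : 5 * γ (j + 1) ≤ a * γ (j + 1) := by gcongr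
    exact ⟨by omega, by omega, by omega⟩

theorem eq_of_norm_add_fst {a : ℤ} (ha : 5 ≤ a) {x y : ℤ}
    (h : rootNorm a x y = 1 ∨ rootNorm a x y = a)
    (h' : rootNorm a (x + 1) y = 1 ∨ rootNorm a (x + 1) y = a) :
    (x = 0 ∧ y = 1) ∨ (x = -1 ∧ y = -1) := by
  have hd : rootNorm a (x + 1) y - rootNorm a x y = a * (2 * x + 1 - y) := by
    unfold rootNorm; ring
  -- A difference `±(a - 1)` would make `a` divide `1`.
  have hndvd : ¬ a ∣ 1 := fun hdvd => by
    have := Int.le_of_dvd one_pos hdvd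
    omega
  have h0 : a * (2 * x + 1 - y) = 0 := by
    rcases h with h | h <;> rcases h' with h' | h' <;> rw [h, h'] at hd
    · omega
    · exact absurd ⟨1 - (2 * x + 1 - y), by linarith⟩ hndvd
    · exact absurd ⟨1 + (2 * x + 1 - y), by linarith⟩ hndvd
    · omega
  have hy : y = 2 * x + 1 := by
    rcases mul_eq_zero.mp h0 with h0 | h0 <;> omega
  subst hy
  have hN : rootNorm a x (2 * x + 1) = 1 - (a - 4) * (x * (x + 1)) := by
    unfold rootNorm; ring
  have hx : x * (x + 1) ≤ 0 := by
    by_contra! hpos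
    have : 0 < (a - 4) * (x * (x + 1)) := mul_pos (by omega) hpos
    omega
  have h1 : -1 ≤ x := by nlinarith
  have h2 : x ≤ 0 := by nlinarith
  omega

theorem eq_of_norm_add_snd {a : ℤ} (ha : 5 ≤ a) {x y : ℤ}
    (h : rootNorm a x y = 1 ∨ rootNorm a x y = a)
    (h' : rootNorm a x (y + 1) = 1 ∨ rootNorm a x (y + 1) = a) :
    (x = 1 ∧ (y = 0 ∨ y = a - 1)) ∨ (x = -1 ∧ (y = -1 ∨ y = -a)) := by
  have hd : rootNorm a x (y + 1) - rootNorm a x y = 2 * y + 1 - a * x := by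
    unfold rootNorm; ring
  have hN : 4 * rootNorm a x y = (2 * y - a * x) ^ 2 - a * (a - 4) * x ^ 2 := by
    unfold rootNorm; ring
  have hc : 0 < a * (a - 4) := mul_pos (by omega) (by omega)
  have hzero : 2 * y - a * x = -1 → 4 * rootNorm a x y ≤ 1 := by
    intro e
    rw [e] at hN
    have : 0 ≤ a * (a - 4) * x ^ 2 := by positivity
    linarith
  have hsq : a * (a - 4) * (x ^ 2 - 1) = 0 → x = 1 ∨ x = -1 := by
    intro e
    rcases mul_eq_zero.mp e with e | e
    · omega
    · have e' : (x - 1) * (x + 1) = 0 := by linarith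
      rcases mul_eq_zero.mp e' with e' | e' <;> omega
  rcases h with h | h <;> rcases h' with h' | h' <;> rw [h, h'] at hd
  · have := hzero (by omega)
    omega
  · have e : 2 * y - a * x = a - 2 := by omega
    rw [e, h] at hN
    rcases hsq (by linarith) with rfl | rfl <;> omega
  · have e : 2 * y - a * x = -a := by omega
    rw [e, h] at hN
    rcases hsq (by linarith) with rfl | rfl <;> omega
  · have := hzero (by omega)
    omega

/-- For `b = 1`, `a ≥ 5`, and a positive real root `β` of `H(a,1)`:
(i) `β + α1 ∈ Δre ↔ β = (0,1)`; (ii) `β - α1 ∈ Δre ↔ β = (1,1)`;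
(iii) `β + α2 ∈ Δre ↔ β = (1,0) ∨ β = (1,a-1)`;
(iv) `β - α2 ∈ Δre ↔ β = (1,1) ∨ β = (1,a)`. -/
theorem stmt7 (a b : ℤ) (hb : b = 1) (ha : 5 ≤ a)
    (γ η : ℤ → ℤ) (hγ0 : γ 0 = 0) (hη0 : η 0 = 1)
    (hγ : ∀ j : ℤ, γ j = η (j - 1) - γ (j - 1))
    (hη : ∀ j : ℤ, η j = a * b * γ j - η (j - 1))
    (αLL αLU αSU αSL : ℤ → ℤ × ℤ)
    (hLL : ∀ j : ℤ, αLL j = (η j, a * γ j))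
    (hLU : ∀ j : ℤ, αLU j = (η j, a * γ (j + 1)))
    (hSU : ∀ j : ℤ, αSU j = (b * γ j, η j))
    (hSL : ∀ j : ℤ, αSL j = (b * γ (j + 1), η j))
    (Δre : Set (ℤ × ℤ))
    (hΔre : Δre = {v | ∃ j : ℤ, v = αLL j ∨ v = αLU j ∨ v = αSU j ∨ v = αSL j})
    (β : ℤ × ℤ)
    (hβ : ∃ j : ℤ, 0 ≤ j ∧ (β = αLL j ∨ β = αLU j ∨ β = αSU j ∨ β = αSL j)) :
    (β + ((1 : ℤ), (0 : ℤ)) ∈ Δre ↔ β = ((0 : ℤ), (1 : ℤ))) ∧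
    (β - ((1 : ℤ), (0 : ℤ)) ∈ Δre ↔ β = ((1 : ℤ), (1 : ℤ))) ∧
    (β + ((0 : ℤ), (1 : ℤ)) ∈ Δre ↔ (β = ((1 : ℤ), (0 : ℤ)) ∨ β = ((1 : ℤ), a - 1))) ∧
    (β - ((0 : ℤ), (1 : ℤ)) ∈ Δre ↔ (β = ((1 : ℤ), (1 : ℤ)) ∨ β = ((1 : ℤ), a))) := by
  subst hb
  replace hη : ∀ j, η j = a * γ j - η (j - 1) := fun j => by simpa using hη j
  have hγ' : ∀ j, γ (j + 1) = η j - γ j := fun j => by simpa using hγ (j + 1)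
  have hγ1 : γ 1 = 1 := by simpa [hγ0, hη0] using hγ' 0
  have hη1 : η 1 = a - 1 := by simpa [hγ1, hη0] using hη 1
  have hinv := invariant_eq_one hγ0 hη0 hγ hη
  have hnorm : ∀ x y : ℤ, (x, y) ∈ Δre → rootNorm a x y = 1 ∨ rootNorm a x y = a := by
    intro x y h
    rw [hΔre] at h
    obtain ⟨j, h⟩ := h
    have hj := hinv j
    simp only [hLL, hLU, hSU, hSL, hγ', one_mul, Prod.mk.injEq] at h
    unfold rootNorm
    rcases h with ⟨rfl, rfl⟩ | ⟨rfl, rfl⟩ | ⟨rfl, rfl⟩ | ⟨rfl, rfl⟩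
    · right; linear_combination a * hj
    · right; linear_combination a * hj
    · left; linear_combination hj
    · left; linear_combination hj
  have hβmem : β ∈ Δre := by
    rw [hΔre]
    obtain ⟨j, -, h⟩ := hβ
    exact ⟨j, h⟩
  obtain ⟨x, y⟩ := β
  have hpos : 0 ≤ x ∧ 0 ≤ y := by
    obtain ⟨j, hj0, h⟩ := hβ
    obtain ⟨h1, h2, h3⟩ := nonneg_of_nonneg_index ha hγ0 hη0 hγ hη j hj0
    have h4 : 0 ≤ η j - γ j := by omega
    simp only [hLL, hLU, hSU, hSL, hγ', one_mul, Prod.mk.injEq] at h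
    rcases h with ⟨rfl, rfl⟩ | ⟨rfl, rfl⟩ | ⟨rfl, rfl⟩ | ⟨rfl, rfl⟩
    · exact ⟨by omega, by positivity⟩
    · exact ⟨by omega, by positivity⟩
    · exact ⟨by omega, by omega⟩
    · exact ⟨by omega, by omega⟩
  have m10 : ((1 : ℤ), (0 : ℤ)) ∈ Δre := by
    rw [hΔre]; exact ⟨0, by simp [hLL, hγ0, hη0]⟩
  have m01 : ((0 : ℤ), (1 : ℤ)) ∈ Δre := by
    rw [hΔre]; exact ⟨0, by simp [hSU, hγ0, hη0]⟩
  have m11 : ((1 : ℤ), (1 : ℤ)) ∈ Δre := by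
    rw [hΔre]; exact ⟨0, by simp [hSL, hγ1, hη0]⟩
  have m1a : ((1 : ℤ), a) ∈ Δre := by
    rw [hΔre]; exact ⟨0, by simp [hLU, hγ1, hη0]⟩
  have m1a' : ((1 : ℤ), a - 1) ∈ Δre := by
    rw [hΔre]; exact ⟨1, by simp [hSU, hγ1, hη1]⟩
  have hβN := hnorm x y hβmem
  simp only [Prod.mk_add_mk, Prod.mk_sub_mk, add_zero, sub_zero, Prod.mk.injEq]
  refine ⟨⟨fun h => ?_, ?_⟩, ⟨fun h => ?_, ?_⟩, ⟨fun h => ?_, ?_⟩, ⟨fun h => ?_, ?_⟩⟩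
  · have := eq_of_norm_add_fst ha hβN (hnorm _ _ h)
    omega
  · rintro ⟨rfl, rfl⟩
    simpa using m11
  · have := eq_of_norm_add_fst ha (hnorm _ _ h) (by simpa using hβN)
    omega
  · rintro ⟨rfl, rfl⟩
    simpa using m01
  · have := eq_of_norm_add_snd ha hβN (hnorm _ _ h)
    omega
  · rintro (⟨rfl, rfl⟩ | ⟨rfl, rfl⟩)
    · simpa using m11
    · simpa using m1a
  · have := eq_of_norm_add_snd ha (hnorm _ _ h) (by simpa using hβN)
    omega
  · rintro (⟨rfl, rfl⟩ | ⟨rfl, rfl⟩)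
    · simpa using m10
    · exact m1a'
end

section
/- Assume a > b. Then: (i) if α and β are short real roots and α + β ∈ Δ^re, then α + β is long; (ii) if α is a short real root, β is a long real root, and α + β ∈ Δ^re, then α + β is short; (iii) if α and β are long real roots, then α + β ∉ Δ^re. -/
/-!
The proof uses the Weyl-invariant quadratic form `Q(x, y) = a x² - a b x y + b y²`, which takes the
value `a` on long roots and `b` on short roots (`normForm_long`, `normForm_short`). Writing
`P(u, v) = Q(u + v) - Q(u) - Q(v)`, one has
`P(u, v)² - 4 Q(u) Q(v) = a b (a b - 4) (det (u, v))²`, so `a b ≥ 4` gives the reverse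
Cauchy-Schwarz inequality `4 Q(u) Q(v) ≤ P(u, v)²` (`four_mul_normForm_le`). If the sum of two
roots had a forbidden length, `P` would be `-b` (short + short = short, short + long = long) or `-a`
(long + long = long), each too small in absolute value. The remaining case long + long = short is
excluded modulo `a`: `a` divides `Q(u)` whenever it divides the second coordinate of `u`, whereas
`0 < b < a`.
-/

/-- The Weyl-invariant quadratic form of `H(a, b)`, normalized so that `α₁` has value `a` and `α₂`
has value `b`. -/
def normForm (a b : ℤ) (v : ℤ × ℤ) : ℤ :=
  a * v.1 ^ 2 - a * b * v.1 * v.2 + b * v.2 ^ 2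

/-- Reverse Cauchy-Schwarz inequality: for `a b ≥ 4` the form is not definite. -/
theorem four_mul_normForm_le (a b : ℤ) (hab : 4 ≤ a * b) (u v : ℤ × ℤ) :
    4 * normForm a b u * normForm a b v ≤
      (normForm a b (u + v) - normForm a b u - normForm a b v) ^ 2 := by
  have h : 0 ≤ a * b * (a * b - 4) * (u.1 * v.2 - u.2 * v.1) ^ 2 :=
    mul_nonneg (mul_nonneg (by linarith) (by linarith)) (sq_nonneg _)
  simp only [normForm, Prod.fst_add, Prod.snd_add]
  linear_combination h

section Sequences

variable {a b : ℤ} {γ η : ℤ → ℤ}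

/-- The quadratic in `η j` and `γ j` is preserved by the recursion, since each step replaces one
variable by the other root of the quadratic in that variable. -/
theorem seq_invariant (hγ0 : γ 0 = 0) (hη0 : η 0 = 1)
    (hγ : ∀ j : ℤ, γ j = η (j - 1) - γ (j - 1))
    (hη : ∀ j : ℤ, η j = a * b * γ j - η (j - 1)) (j : ℤ) :
    η j ^ 2 - a * b * η j * γ j + a * b * γ j ^ 2 = 1 := by
  have step : ∀ j : ℤ, η j ^ 2 - a * b * η j * γ j + a * b * γ j ^ 2 =
      η (j - 1) ^ 2 - a * b * η (j - 1) * γ (j - 1) + a * b * γ (j - 1) ^ 2 := by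
    intro j
    rw [hη j, hγ j]
    ring
  induction j using Int.induction_on with
  | zero => simp [hγ0, hη0]
  | succ i ih =>
    rw [step, add_sub_cancel_right]
    exact ih
  | pred i ih =>
    rw [← step]
    exact ih

theorem seq_invariant_succ (hγ0 : γ 0 = 0) (hη0 : η 0 = 1)
    (hγ : ∀ j : ℤ, γ j = η (j - 1) - γ (j - 1))
    (hη : ∀ j : ℤ, η j = a * b * γ j - η (j - 1)) (j : ℤ) :
    η j ^ 2 - a * b * η j * γ (j + 1) + a * b * γ (j + 1) ^ 2 = 1 := by
  have h := seq_invariant hγ0 hη0 hγ hη j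
  rw [hγ (j + 1), add_sub_cancel_right]
  linear_combination h

end Sequences

theorem normForm_long {a b x y : ℤ} (h : x ^ 2 - a * b * x * y + a * b * y ^ 2 = 1) :
    normForm a b (x, a * y) = a := by
  simp only [normForm]
  linear_combination a * h

theorem normForm_short {a b x y : ℤ} (h : x ^ 2 - a * b * x * y + a * b * y ^ 2 = 1) :
    normForm a b (b * y, x) = b := by
  simp only [normForm]
  linear_combination b * h


/-- For `a > b`: (i) the sum of two short real roots, if a real root, is long;
(ii) the sum of a short and a long real root, if a real root, is short;
(iii) the sum of two long real roots is never a real root. -/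
theorem stmt8 (a b : ℤ) (hba : b < a) (hb1 : 1 ≤ b) (hab : 4 ≤ a * b)
    (γ η : ℤ → ℤ) (hγ0 : γ 0 = 0) (hη0 : η 0 = 1)
    (hγ : ∀ j : ℤ, γ j = η (j - 1) - γ (j - 1))
    (hη : ∀ j : ℤ, η j = a * b * γ j - η (j - 1))
    (αLL αLU αSU αSL : ℤ → ℤ × ℤ)
    (hLL : ∀ j : ℤ, αLL j = (η j, a * γ j))
    (hLU : ∀ j : ℤ, αLU j = (η j, a * γ (j + 1)))
    (hSU : ∀ j : ℤ, αSU j = (b * γ j, η j))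
    (hSL : ∀ j : ℤ, αSL j = (b * γ (j + 1), η j))
    (Δre : Set (ℤ × ℤ))
    (hΔre : Δre = {v | ∃ j : ℤ, v = αLL j ∨ v = αLU j ∨ v = αSU j ∨ v = αSL j})
    (IsLong IsShort : ℤ × ℤ → Prop)
    (hLong : ∀ v, IsLong v ↔ ∃ j : ℤ, v = αLL j ∨ v = αLU j)
    (hShort : ∀ v, IsShort v ↔ ∃ j : ℤ, v = αSU j ∨ v = αSL j) :
    (∀ α β : ℤ × ℤ, IsShort α → IsShort β → α + β ∈ Δre → IsLong (α + β)) ∧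
    (∀ α β : ℤ × ℤ, IsShort α → IsLong β → α + β ∈ Δre → IsShort (α + β)) ∧
    (∀ α β : ℤ × ℤ, IsLong α → IsLong β → α + β ∉ Δre) := by
  have inv := seq_invariant hγ0 hη0 hγ hη
  have inv' := seq_invariant_succ hγ0 hη0 hγ hη
  have qLong : ∀ v, IsLong v → normForm a b v = a ∧ a ∣ v.2 := by
    intro v hv
    obtain ⟨j, rfl | rfl⟩ := (hLong v).1 hv
    · rw [hLL]
      exact ⟨normForm_long (inv j), dvd_mul_right _ _⟩
    · rw [hLU]
      exact ⟨normForm_long (inv' j), dvd_mul_right _ _⟩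
  have qShort : ∀ v, IsShort v → normForm a b v = b := by
    intro v hv
    obtain ⟨j, rfl | rfl⟩ := (hShort v).1 hv
    · rw [hSU]
      exact normForm_short (inv j)
    · rw [hSL]
      exact normForm_short (inv' j)
  have root_cases : ∀ v ∈ Δre, IsLong v ∨ IsShort v := by
    intro v hv
    rw [hΔre] at hv
    obtain ⟨j, h | h | h | h⟩ := hv
    · exact Or.inl ((hLong v).2 ⟨j, Or.inl h⟩)
    · exact Or.inl ((hLong v).2 ⟨j, Or.inr h⟩)
    · exact Or.inr ((hShort v).2 ⟨j, Or.inl h⟩)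
    · exact Or.inr ((hShort v).2 ⟨j, Or.inr h⟩)
  refine ⟨fun α β hα hβ h => ?_, fun α β hα hβ h => ?_, fun α β hα hβ h => ?_⟩
  · refine (root_cases _ h).resolve_right fun hs => ?_
    have key := four_mul_normForm_le a b hab α β
    rw [qShort _ hs, qShort _ hα, qShort _ hβ] at key
    nlinarith
  · refine (root_cases _ h).resolve_left fun hl => ?_
    have key := four_mul_normForm_le a b hab α β
    rw [(qLong _ hl).1, qShort _ hα, (qLong _ hβ).1] at key
    nlinarith
  · rcases root_cases _ h with hl | hs
    · have key := four_mul_normForm_le a b hab α β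
      rw [(qLong _ hl).1, (qLong _ hα).1, (qLong _ hβ).1] at key
      nlinarith
    · obtain ⟨c, hc⟩ : a ∣ (α + β).2 := dvd_add (qLong _ hα).2 (qLong _ hβ).2
      have hQ := qShort _ hs
      have hdvd : a ∣ b := by
        rw [normForm, hc] at hQ
        exact ⟨(α + β).1 ^ 2 - b * (α + β).1 * (a * c) + b * a * c ^ 2, by
          linear_combination -hQ⟩
      have := Int.le_of_dvd (by linarith) hdvd
      linarith
end

section
/- Assume b = 1 and a ≥ 5. For α, β, γ ∈ Δ^re one has α + β + γ = 0 if and only if there exists j ∈ ℤ such that {α, β, γ} = {α^{SU}_j, α^{SU}_{j+1}, −α^{LU}_j} or {α, β, γ} = {α^{SL}_j, α^{SL}_{j+1}, −α^{LL}_{j+1}}. -/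
/-!
The short real roots of `H(a,1)` are vectors on which the form `Q(x,y) = y² - a x y + a x²` takes
the value `1`; the long ones are the vectors `(X, aZ)` for which `Q(Z,X) = 1`, and then
`Q(X,aZ) = a`. Let `B` be the polar form of `Q`. For all `u`, `v`,
`4 Q(u) Q(v) - B(u,v)² = (4a - a²) det(u,v)²`, and `4a - a² < 0` because `a ≥ 5`.

* Three vectors with `Q = 1` cannot sum to zero: two of them would have `B = -1`, and the left side
  of the identity would be `3 > 0`. This excludes three short roots and, after exchanging
  coordinates, three long ones (`no_three_short`).
* Two long roots and one short root cannot sum to zero: the second coordinate of the short root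
  would be divisible by `a`, whereas `Q = 1` forces it to be a unit modulo `a` (`short_snd_ne`).
* If `u`, `v` are short and `u + v` is long, then `B(u,v) = a - 2`, so the identity reads
  `det(u,v)² = 1`. The values of `B(u,v)` and `det(u,v)` determine `v` from `u` linearly: `v` is the
  image of `u` under `(x,y) ↦ (y - x, (a-1) y - a x)` or its inverse (`short_neighbour`). This map
  shifts the index of the family `αSU` by one, and its inverse that of `αSL`.
-/

/-- If `Q(x,y) = 1` then `y` is a unit modulo `a`; in particular it is not a multiple of `a`. -/
lemma short_snd_ne {a x y z : ℤ} (ha : 5 ≤ a) (h : y ^ 2 - a * x * y + a * x ^ 2 = 1) :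
    y ≠ a * z := by
  rintro rfl
  have : a ∣ 1 := ⟨a * z ^ 2 - a * x * z + x ^ 2, by linear_combination -h⟩
  have := Int.le_of_dvd one_pos this
  omega

lemma no_three_short {a x y x' y' x'' y'' : ℤ} (ha : 5 ≤ a)
    (h : y ^ 2 - a * x * y + a * x ^ 2 = 1) (h' : y' ^ 2 - a * x' * y' + a * x' ^ 2 = 1)
    (h'' : y'' ^ 2 - a * x'' * y'' + a * x'' ^ 2 = 1)
    (hx : x + x' + x'' = 0) (hy : y + y' + y'' = 0) : False := by
  obtain rfl : x'' = -x - x' := by omega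
  obtain rfl : y'' = -y - y' := by omega
  have hB : 2 * y * y' - a * (x * y' + x' * y) + 2 * a * x * x' = -1 := by
    linear_combination h'' - h - h'
  have key : 3 = (4 * a - a ^ 2) * (x * y' - y * x') ^ 2 := by
    linear_combination (-4) * (y' ^ 2 - a * x' * y' + a * x' ^ 2) * h - 4 * h' +
      (2 * y * y' - a * (x * y' + x' * y) + 2 * a * x * x' - 1) * hB
  nlinarith [mul_nonneg (show 0 ≤ a ^ 2 - 4 * a by nlinarith) (sq_nonneg (x * y' - y * x'))]

/-- If `u = (x, y)` and `v = (x', y')` have `Q = 1` and `u + v = -(X, aZ)` has `Q = a`, then `v` is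
the image of `u` under the map `(x, y) ↦ (y - x, (a-1) y - a x)` or under its inverse. -/
lemma short_neighbour {a x y x' y' X Z : ℤ} (ha : 5 ≤ a)
    (h : y ^ 2 - a * x * y + a * x ^ 2 = 1) (h' : y' ^ 2 - a * x' * y' + a * x' ^ 2 = 1)
    (hL : X ^ 2 - a * Z * X + a * Z ^ 2 = 1)
    (hx : x + x' + X = 0) (hy : y + y' + a * Z = 0) :
    (x' = y - x ∧ y' = a * (y - x) - y) ∨ (y = a * x - y' ∧ x = y' - x') := by
  obtain rfl : X = -x - x' := by omega
  have hB : 2 * y * y' - a * (x * y' + x' * y) + 2 * a * x * x' = a - 2 := by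
    have e : a * Z = -y - y' := by omega
    have : (y + y') ^ 2 - a * (x + x') * (y + y') + a * (x + x') ^ 2 = a := by
      linear_combination a * hL + (a * (-x - x') - a * Z + y + y') * e
    linear_combination this - h - h'
  have key : (4 * a - a ^ 2) * ((x * y' - y * x') ^ 2 - 1) = 0 := by
    linear_combination 4 * (y' ^ 2 - a * x' * y' + a * x' ^ 2) * h + 4 * h' -
      (2 * y * y' - a * (x * y' + x' * y) + 2 * a * x * x' + a - 2) * hB
  have hd : (x * y' - y * x') ^ 2 = 1 := by
    rcases mul_eq_zero.mp key with h0 | h0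
    · nlinarith
    · linarith
  -- `B(u,v)` and `det(u,v)` are two linear equations for `v`, with determinant `2 Q(u) = 2`.
  have ex : 2 * x' = x * (a - 2) - (2 * y - a * x) * (x * y' - y * x') := by
    linear_combination x * hB - 2 * x' * h
  have ey : 2 * y' = y * (a - 2) + (2 * a * x - a * y) * (x * y' - y * x') := by
    linear_combination y * hB - 2 * y' * h
  rcases sq_eq_sq_iff_eq_or_eq_neg.mp (hd.trans (one_pow 2).symm) with d | d <;> rw [d] at ex ey
  · right; constructor <;> linarith
  · left; constructor <;> linarith

/-- The distinctness of `p`, `q`, `r` turns equality of sets into equality of multisets. -/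
lemma sum_eq_of_triple_eq {M : Type*} [AddCommGroup M] {α β c p q r : M}
    (h : ({α, β, c} : Set M) = {p, q, r}) (hpq : p ≠ q) (hpr : p ≠ r) (hqr : q ≠ r) :
    α + β + c = p + q + r := by
  have h1 : α ∈ ({p, q, r} : Set M) := h ▸ by simp
  have h2 : β ∈ ({p, q, r} : Set M) := h ▸ by simp
  have h3 : c ∈ ({p, q, r} : Set M) := h ▸ by simp
  have h4 : p ∈ ({α, β, c} : Set M) := h ▸ by simp
  have h5 : q ∈ ({α, β, c} : Set M) := h ▸ by simp
  have h6 : r ∈ ({α, β, c} : Set M) := h ▸ by simp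
  simp only [Set.mem_insert_iff, Set.mem_singleton_iff] at h1 h2 h3 h4 h5 h6
  clear h
  rcases h1 with rfl | rfl | rfl <;> rcases h2 with rfl | rfl | rfl <;>
    rcases h3 with rfl | rfl | rfl <;> first | (exfalso; grind) | abel


/-- For `b = 1`, `a ≥ 5`, and real roots `α, β, c` of `H(a,1)`: `α + β + c = 0` if and only if
`{α, β, c} = {αSU j, αSU (j+1), -αLU j}` or `{α, β, c} = {αSL j, αSL (j+1), -αLL (j+1)}`
for some `j : ℤ`. -/
theorem stmt9 (a b : ℤ) (hb : b = 1) (ha : 5 ≤ a)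
    (γ η : ℤ → ℤ) (hγ0 : γ 0 = 0) (hη0 : η 0 = 1)
    (hγ : ∀ j : ℤ, γ j = η (j - 1) - γ (j - 1))
    (hη : ∀ j : ℤ, η j = a * b * γ j - η (j - 1))
    (αLL αLU αSU αSL : ℤ → ℤ × ℤ)
    (hLL : ∀ j : ℤ, αLL j = (η j, a * γ j))
    (hLU : ∀ j : ℤ, αLU j = (η j, a * γ (j + 1)))
    (hSU : ∀ j : ℤ, αSU j = (b * γ j, η j))
    (hSL : ∀ j : ℤ, αSL j = (b * γ (j + 1), η j))
    (Δre : Set (ℤ × ℤ))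
    (hΔre : Δre = {v | ∃ j : ℤ, v = αLL j ∨ v = αLU j ∨ v = αSU j ∨ v = αSL j})
    (α β c : ℤ × ℤ) (hα : α ∈ Δre) (hβ : β ∈ Δre) (hc : c ∈ Δre) :
    α + β + c = 0 ↔
      ∃ j : ℤ, ({α, β, c} : Set (ℤ × ℤ)) = {αSU j, αSU (j + 1), -αLU j} ∨
        ({α, β, c} : Set (ℤ × ℤ)) = {αSL j, αSL (j + 1), -αLL (j + 1)} := by
  subst hb
  simp only [one_mul, mul_one] at hη hSU hSL
  have gs (j : ℤ) : γ (j + 1) = η j - γ j := by simpa using hγ (j + 1)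
  have es (j : ℤ) : η (j + 1) = a * γ (j + 1) - η j := by simpa using hη (j + 1)
  have hQ (j : ℤ) : η j ^ 2 - a * γ j * η j + a * γ j ^ 2 = 1 := by
    induction j using Int.induction_on with
    | zero => simp [hγ0, hη0]
    | succ i ih => rw [es, gs]; linear_combination ih
    | pred i ih =>
      have h1 := gs (-(i : ℤ) - 1)
      have h2 := es (-(i : ℤ) - 1)
      rw [sub_add_cancel] at h1 h2
      rw [h2, h1] at ih
      linear_combination ih
  have hQ' (j : ℤ) : η j ^ 2 - a * γ (j + 1) * η j + a * γ (j + 1) ^ 2 = 1 := by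
    rw [gs]; linear_combination hQ j
  have split : ∀ v ∈ Δre,
      ((∃ j, v = αSU j ∨ v = αSL j) ∧ v.2 ^ 2 - a * v.1 * v.2 + a * v.1 ^ 2 = 1) ∨
      ∃ X Z, v = (X, a * Z) ∧ X ^ 2 - a * Z * X + a * Z ^ 2 = 1 := by
    intro v hv
    rw [hΔre] at hv
    obtain ⟨j, rfl | rfl | rfl | rfl⟩ := hv
    · exact .inr ⟨_, _, hLL j, hQ j⟩
    · exact .inr ⟨_, _, hLU j, hQ' j⟩
    · exact .inl ⟨⟨j, .inl rfl⟩, by rw [hSU]; exact hQ j⟩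
    · exact .inl ⟨⟨j, .inr rfl⟩, by rw [hSL]; exact hQ' j⟩
  have sumU (j : ℤ) : αSU j + αSU (j + 1) = αLU j := by
    rw [hSU, hSU, hLU]
    ext
    · simp [gs]
    · simp [es]
  have sumL (j : ℤ) : αSL j + αSL (j + 1) = αLL (j + 1) := by
    rw [hSL, hSL, hLL]
    ext
    · simp [gs (j + 1)]
    · simp [es]
  -- The predicate that the unordered triple `u`, `v`, `w` is one of the two listed kinds.
  let P : ℤ × ℤ → ℤ × ℤ → ℤ × ℤ → Prop := fun u v w =>
    ∃ j : ℤ, ({u, v, w} : Set (ℤ × ℤ)) = {αSU j, αSU (j + 1), -αLU j} ∨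
        ({u, v, w} : Set (ℤ × ℤ)) = {αSL j, αSL (j + 1), -αLL (j + 1)}
  have P12 {u v w} (h : P u v w) : P v u w := by
    simpa only [P, Set.insert_comm v u] using h
  have P23 {u v w} (h : P u v w) : P u w v := by
    simpa only [P, Set.pair_comm w v] using h
  have PU (j : ℤ) : ∀ w, αSU j + αSU (j + 1) + w = 0 → P (αSU j) (αSU (j + 1)) w := by
    intro w hw
    rw [sumU] at hw
    rw [eq_neg_of_add_eq_zero_right hw]
    exact ⟨j, .inl rfl⟩
  have PL (j : ℤ) : ∀ w, αSL j + αSL (j + 1) + w = 0 → P (αSL j) (αSL (j + 1)) w := by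
    intro w hw
    rw [sumL] at hw
    rw [eq_neg_of_add_eq_zero_right hw]
    exact ⟨j, .inr rfl⟩
  have main : ∀ u v w : ℤ × ℤ, (∃ j, u = αSU j ∨ u = αSL j) →
      u.2 ^ 2 - a * u.1 * u.2 + a * u.1 ^ 2 = 1 → v.2 ^ 2 - a * v.1 * v.2 + a * v.1 ^ 2 = 1 →
      (∃ X Z, w = (X, a * Z) ∧ X ^ 2 - a * Z * X + a * Z ^ 2 = 1) → u + v + w = 0 → P u v w := by
    rintro u v _ ⟨j, hu⟩ Qu Qv ⟨X, Z, rfl, hL⟩ h0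
    have hx : u.1 + v.1 + X = 0 := congrArg Prod.fst h0
    have hy : u.2 + v.2 + a * Z = 0 := congrArg Prod.snd h0
    have g1 := gs (j - 1)
    have e1 := es (j - 1)
    have g2 := gs j
    have e2 := es j
    have g3 := gs (j + 1)
    rw [sub_add_cancel] at g1 e1
    have hN := short_neighbour ha Qu Qv hL hx hy
    rcases hu with rfl | rfl
    · simp only [hSU] at hN
      rcases hN with ⟨h1, h2⟩ | ⟨h1, h2⟩
      · have : v = αSU (j + 1) := by
          rw [hSU]
          ext
          · exact h1.trans g2.symm
          · rw [h2, e2, g2]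
        subst this
        exact PU j _ h0
      · have : v = αSU (j - 1) := by
          rw [hSU]
          ext <;> dsimp only <;> linarith
        subst this
        have := PU (j - 1) (X, a * Z)
        rw [sub_add_cancel] at this
        exact P12 (this (by rw [← h0]; abel))
    · simp only [hSL] at hN
      rcases hN with ⟨h1, h2⟩ | ⟨h1, h2⟩
      · have : v = αSL (j - 1) := by
          rw [hSL, sub_add_cancel]
          ext
          · dsimp only; linarith
          · dsimp only; rw [h2, g2]; linear_combination -e1
        subst this
        have := PL (j - 1) (X, a * Z)
        rw [sub_add_cancel] at this
        exact P12 (this (by rw [← h0]; abel))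
      · have : v = αSL (j + 1) := by
          rw [hSL]
          ext <;> dsimp only <;> linarith
        subst this
        exact PL j _ h0
  change _ ↔ P α β c
  constructor
  · intro h
    have hx : α.1 + β.1 + c.1 = 0 := congrArg Prod.fst h
    have hy : α.2 + β.2 + c.2 = 0 := congrArg Prod.snd h
    rcases split α hα with ⟨sα, qα⟩ | lα <;> rcases split β hβ with ⟨sβ, qβ⟩ | lβ <;>
      rcases split c hc with ⟨sc, qc⟩ | lc
    · exact (no_three_short ha qα qβ qc hx hy).elim
    · exact main _ _ _ sα qα qβ lc h
    · exact P23 (main _ _ _ sα qα qc lβ (by rw [← h]; abel))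
    · obtain ⟨X, Z, rfl, -⟩ := lβ
      obtain ⟨X', Z', rfl, -⟩ := lc
      exact (short_snd_ne (z := -Z - Z') ha qα (by linear_combination hy)).elim
    · exact P12 (P23 (main _ _ _ sβ qβ qc lα (by rw [← h]; abel)))
    · obtain ⟨X, Z, rfl, -⟩ := lα
      obtain ⟨X', Z', rfl, -⟩ := lc
      exact (short_snd_ne (z := -Z - Z') ha qβ (by linear_combination hy)).elim
    · obtain ⟨X, Z, rfl, -⟩ := lα
      obtain ⟨X', Z', rfl, -⟩ := lβ
      exact (short_snd_ne (z := -Z - Z') ha qc (by linear_combination hy)).elim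
    · obtain ⟨X, Z, rfl, h1⟩ := lα
      obtain ⟨X', Z', rfl, h2⟩ := lβ
      obtain ⟨X'', Z'', rfl, h3⟩ := lc
      refine (no_three_short ha h1 h2 h3 ?_ hx).elim
      have : a * (Z + Z' + Z'') = 0 := by linear_combination hy
      exact (mul_eq_zero.mp this).resolve_left (by omega)
  · rintro ⟨j, h | h⟩
    · rw [sum_eq_of_triple_eq h, sumU, add_neg_cancel]
      · intro e
        rw [hSU, hSU, Prod.mk.injEq] at e
        have e1 := es j
        have e2 := gs j
        have e3 := hQ j
        rw [← e.2] at e1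
        rw [← e.1] at e1 e2
        have hη2 : η j = 2 * γ j := by linarith
        rw [hη2] at e1 e3
        nlinarith
      · rw [hSU, hLU]
        exact fun e => short_snd_ne (z := -γ (j + 1)) ha (hQ j) (by simpa using congrArg Prod.snd e)
      · rw [hSU, hLU]
        exact fun e => short_snd_ne (z := -γ (j + 1)) ha (hQ (j + 1))
          (by simpa using congrArg Prod.snd e)
    · rw [sum_eq_of_triple_eq h, sumL, add_neg_cancel]
      · intro e
        rw [hSL, hSL, Prod.mk.injEq] at e
        have e1 := es j
        have e2 := gs (j + 1)
        have e3 := hQ' j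
        rw [← e.2] at e1 e2
        rw [← e.1] at e2
        have hη2 : η j = 2 * γ (j + 1) := by linarith
        rw [hη2] at e1 e3
        nlinarith
      · rw [hSL, hLL]
        exact fun e => short_snd_ne (z := -γ (j + 1)) ha (hQ' j) (by simpa using congrArg Prod.snd e)
      · rw [hSL, hLL]
        exact fun e => short_snd_ne (z := -γ (j + 1)) ha (hQ' (j + 1))
          (by simpa using congrArg Prod.snd e)
end

section
/- Assume b = 1 and a ≥ 5. Let j ∈ ℤ, let (α, β) be either (α^{SU}_j, α^{SU}_{j+1}) or (α^{SL}_j, α^{SL}_{j+1}), and set γ = −(α + β) (which is a real root). Then p_{α,β} = p_{β,α} = a − 1 and p_{α,γ} = p_{γ,α} = p_{β,γ} = p_{γ,β} = 0; equivalently, β − i·α ∈ Δ for every integer 1 ≤ i ≤ a−1 but β − a·α ∉ Δ, α − i·β ∈ Δ for every integer 1 ≤ i ≤ a−1 but α − a·β ∉ Δ, and none of γ − α, α − γ, γ − β, β − γ lies in Δ. -/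
/-!
With `b = 1`, let `Q (x, y) = a x² - a x y + y²`. Along the recurrence `Q` is constant, so every
short real root has `Q = 1` and every long one has `Q = a`, while imaginary roots have `Q ≤ 0`:
a vector with `Q = 2a + 1` is not a root (`form_SU`, `stmt10`). If `α, β` are consecutive
short roots of the same kind, then `α + β` is a long root, so `Q (α + β) = a`, and expanding the
quadratic form gives `Q (β - i α) = i² - (a - 2) i + 1`. This is negative for `1 ≤ i ≤ a - 3`,
giving imaginary roots; it equals `1`, `a`, `2a + 1` for `i = a - 2`, `a - 1`, `a`. The vectors at
`i = a - 2` and `i = a - 1` are negatives of neighbouring real roots, hence real roots by the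
symmetry `γ (-j) = -γ j`, `η (-1 - j) = -η j`. Finally `2α + β` and `α + 2β` have
`Q = 2a + 1`, which settles the strings through `-(α + β)`.
-/

/-- The invariant form `a x² - a x y + y²` of the root lattice for `b = 1`, normalized so that
short real roots have value `1` and long ones value `a`. -/
def form (a : ℤ) (v : ℤ × ℤ) : ℤ := a * v.1 ^ 2 - a * v.1 * v.2 + v.2 ^ 2

/-- Expansion of the form along a string, with the polar form of `u, v` written as
`form (u + v) - form u - form v`. -/
theorem form_sub_smul (a i : ℤ) (u v : ℤ × ℤ) :
    form a (v - i • u)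
      = form a v + i ^ 2 * form a u - i * (form a (u + v) - form a u - form a v) := by
  simp only [form, Prod.fst_sub, Prod.snd_sub, Prod.fst_add, Prod.snd_add, Prod.smul_fst,
    Prod.smul_snd, smul_eq_mul]
  ring

theorem form_neg (a : ℤ) (v : ℤ × ℤ) : form a (-v) = form a v := by
  simp [form]

/-- The root string of `u` through `v`, once its two real members at `i = a - 2` and `i = a - 1`
are known: the members before them are imaginary, and the next vector has form value `2a + 1`. -/
theorem string_of_form {a : ℤ} (ha : 5 ≤ a) {Δ : Set (ℤ × ℤ)}
    (hval : ∀ v ∈ Δ, form a v = 1 ∨ form a v = a ∨ form a v ≤ 0)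
    (him : ∀ v, form a v < 0 → v ∈ Δ) {u v : ℤ × ℤ}
    (hu : form a u = 1) (hv : form a v = 1) (huv : form a (u + v) = a)
    (h2 : v - (a - 2) • u ∈ Δ) (h1 : v - (a - 1) • u ∈ Δ) :
    (∀ i : ℤ, 1 ≤ i → i ≤ a - 1 → v - i • u ∈ Δ) ∧ v - a • u ∉ Δ := by
  have hQ (i : ℤ) : form a (v - i • u) = 1 + i ^ 2 - i * (a - 2) := by
    rw [form_sub_smul, hu, hv, huv]; ring
  refine ⟨fun i hi hia => ?_, fun h => ?_⟩
  · obtain rfl | rfl | hi3 : i = a - 2 ∨ i = a - 1 ∨ i ≤ a - 3 := by omega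
    · exact h2
    · exact h1
    · apply him
      rw [hQ]
      nlinarith [mul_nonneg (sub_nonneg.2 hi) (sub_nonneg.2 hi3)]
  · have := hval _ h
    have e : form a (v - a • u) = 2 * a + 1 := by rw [hQ]; ring
    omega

/-- `-(2u + v)` and its negative have form value `2a + 1`, so they are not roots. -/
theorem third_root {a : ℤ} (ha : 5 ≤ a) {Δ : Set (ℤ × ℤ)}
    (hval : ∀ v ∈ Δ, form a v = 1 ∨ form a v = a ∨ form a v ≤ 0) {u v : ℤ × ℤ}
    (hu : form a u = 1) (hv : form a v = 1) (huv : form a (u + v) = a) :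
    -(u + v) - u ∉ Δ ∧ u - -(u + v) ∉ Δ := by
  have e : form a (v - (-2 : ℤ) • u) = 2 * a + 1 := by
    rw [form_sub_smul, hu, hv, huv]; ring
  have e1 : u - -(u + v) = v - (-2 : ℤ) • u := by module
  have e2 : -(u + v) - u = -(v - (-2 : ℤ) • u) := by module
  refine ⟨fun h => ?_, fun h => ?_⟩
  · have := hval _ h
    rw [e2, form_neg, e] at this
    omega
  · have := hval _ h
    rw [e1, e] at this
    omega

section Sequences

variable {a : ℤ} {γ η : ℤ → ℤ}

theorem form_SU (hγ0 : γ 0 = 0) (hη0 : η 0 = 1)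
    (hγ : ∀ j, γ (j + 1) = η j - γ j) (hη : ∀ j, η (j + 1) = a * γ (j + 1) - η j) (j : ℤ) :
    form a (γ j, η j) = 1 := by
  have step (j : ℤ) : form a (γ (j + 1), η (j + 1)) = form a (γ j, η j) := by
    simp only [form, hη, hγ]; ring
  induction j with
  | zero => simp [form, hγ0, hη0]
  | succ n ih => rw [step, ih]
  | pred n ih =>
    have := step (-(n : ℤ) - 1)
    rw [sub_add_cancel] at this
    rw [← this, ih]

/-- The reflection `j ↦ -1 - j` of the index realizes negation of roots. -/
theorem seq_neg (hγ0 : γ 0 = 0) (hη0 : η 0 = 1)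
    (hγ : ∀ j, γ (j + 1) = η j - γ j) (hη : ∀ j, η (j + 1) = a * γ (j + 1) - η j) (j : ℤ) :
    γ (-j) = -γ j ∧ η (-1 - j) = -η j := by
  induction j with
  | zero =>
    have h := hη (-1)
    norm_num [hγ0, hη0] at h ⊢
    omega
  | succ n ih =>
    obtain ⟨ih1, ih2⟩ := ih
    have h1 := hγ (-1 - n)
    have h2 := hη (-1 - (n + 1))
    rw [show -1 - (n : ℤ) + 1 = -n by ring] at h1
    rw [show -1 - ((n : ℤ) + 1) + 1 = -1 - n by ring] at h2
    have h3 : γ (-(n + 1)) = -γ (n + 1) := by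
      rw [show -((n : ℤ) + 1) = -1 - n by ring]
      linarith [hγ n]
    refine ⟨h3, ?_⟩
    rw [show -1 - (n : ℤ) = -(n + 1) by ring, h3] at h2
    rw [show -((n : ℤ) + 1) = -1 - n by ring] at h2
    linarith [hη n]
  | pred n ih =>
    obtain ⟨ih1, ih2⟩ := ih
    rw [neg_neg] at ih1
    rw [show -1 - -(n : ℤ) = n - 1 by ring] at ih2
    have h1 := hγ n
    have h2 := hη (n - 1)
    have h3 := hγ (-n - 1)
    have h4 := hη (-n - 1)
    rw [sub_add_cancel] at h2 h3 h4
    rw [show -(-(n : ℤ) - 1) = n + 1 by ring, show -1 - (-(n : ℤ) - 1) = n by ring]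
    rw [ih1] at h2
    constructor <;> linarith

end Sequences


/-- For `b = 1`, `a ≥ 5`, with `(α, β) = (αSU j, αSU (j+1))` or `(αSL j, αSL (j+1))` and
`c = -(α + β)` (a real root): `p_{α,β} = p_{β,α} = a - 1` and
`p_{α,c} = p_{c,α} = p_{β,c} = p_{c,β} = 0`, expressed via root strings in `Δ = Δre ∪ Δim`. -/
theorem stmt10 (a b : ℤ) (hb : b = 1) (ha : 5 ≤ a)
    (γ η : ℤ → ℤ) (hγ0 : γ 0 = 0) (hη0 : η 0 = 1)
    (hγ : ∀ j : ℤ, γ j = η (j - 1) - γ (j - 1))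
    (hη : ∀ j : ℤ, η j = a * b * γ j - η (j - 1))
    (αLL αLU αSU αSL : ℤ → ℤ × ℤ)
    (hLL : ∀ j : ℤ, αLL j = (η j, a * γ j))
    (hLU : ∀ j : ℤ, αLU j = (η j, a * γ (j + 1)))
    (hSU : ∀ j : ℤ, αSU j = (b * γ j, η j))
    (hSL : ∀ j : ℤ, αSL j = (b * γ (j + 1), η j))
    (Δre : Set (ℤ × ℤ))
    (hΔre : Δre = {v | ∃ j : ℤ, v = αLL j ∨ v = αLU j ∨ v = αSU j ∨ v = αSL j})
    (Δim : Set (ℤ × ℤ))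
    (hΔim : Δim = {v | v ≠ 0 ∧ a * v.1 ^ 2 - a * b * v.1 * v.2 + b * v.2 ^ 2 ≤ 0})
    (Δ : Set (ℤ × ℤ)) (hΔ : Δ = Δre ∪ Δim)
    (j : ℤ) (α β : ℤ × ℤ)
    (hpair : (α = αSU j ∧ β = αSU (j + 1)) ∨ (α = αSL j ∧ β = αSL (j + 1)))
    (c : ℤ × ℤ) (hc : c = -(α + β)) :
    c ∈ Δre ∧
    (∀ i : ℤ, 1 ≤ i → i ≤ a - 1 → β - i • α ∈ Δ) ∧ β - a • α ∉ Δ ∧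
    (∀ i : ℤ, 1 ≤ i → i ≤ a - 1 → α - i • β ∈ Δ) ∧ α - a • β ∉ Δ ∧
    c - α ∉ Δ ∧ α - c ∉ Δ ∧ c - β ∉ Δ ∧ β - c ∉ Δ := by
  subst hb
  simp only [one_mul, mul_one] at hη hSU hSL hΔim
  have hγ' (j : ℤ) : γ (j + 1) = η j - γ j := by simpa using hγ (j + 1)
  have hη' (j : ℤ) : η (j + 1) = a * γ (j + 1) - η j := by simpa using hη (j + 1)
  have qSU (k : ℤ) : form a (αSU k) = 1 := by rw [hSU, form_SU hγ0 hη0 hγ' hη']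
  have qSL (k : ℤ) : form a (αSL k) = 1 := by
    rw [← qSU k, hSU, hSL, hγ']; simp only [form]; ring
  have qLL (k : ℤ) : form a (αLL k) = a := by
    have h := qSU k
    simp only [hSU, hLL, form] at h ⊢
    linear_combination a * h
  have qLU (k : ℤ) : form a (αLU k) = a := by
    have h := qSL k
    simp only [hSL, hLU, form] at h ⊢
    linear_combination a * h
  have ng (k : ℤ) := (seq_neg hγ0 hη0 hγ' hη' k).1
  have ne (k : ℤ) := (seq_neg hγ0 hη0 hγ' hη' k).2
  have nSU (k : ℤ) : -αSU k = αSL (-1 - k) := by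
    rw [hSU, hSL, show -1 - k + 1 = -k by ring, ng, ne, Prod.neg_mk]
  have nSL (k : ℤ) : -αSL k = αSU (-1 - k) := by
    rw [hSU, hSL, ne, show -1 - k = -(k + 1) by ring, ng, Prod.neg_mk]
  have nLU (k : ℤ) : -αLU k = αLL (-1 - k) := by
    rw [hLU, hLL, ne, show -1 - k = -(k + 1) by ring, ng, Prod.neg_mk, mul_neg]
  have nLL (k : ℤ) : -αLL k = αLU (-1 - k) := by
    rw [hLU, hLL, show -1 - k + 1 = -k by ring, ng, ne, Prod.neg_mk, mul_neg]
  have mSU (k : ℤ) : -αSU k ∈ Δre := by rw [hΔre]; exact ⟨_, .inr (.inr (.inr (nSU k)))⟩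
  have mSL (k : ℤ) : -αSL k ∈ Δre := by rw [hΔre]; exact ⟨_, .inr (.inr (.inl (nSL k)))⟩
  have mLU (k : ℤ) : -αLU k ∈ Δre := by rw [hΔre]; exact ⟨_, .inl (nLU k)⟩
  have mLL (k : ℤ) : -αLL k ∈ Δre := by rw [hΔre]; exact ⟨_, .inr (.inl (nLL k))⟩
  have hval : ∀ v ∈ Δ, form a v = 1 ∨ form a v = a ∨ form a v ≤ 0 := by
    intro v hv
    rw [hΔ, hΔre, hΔim] at hv
    rcases hv with ⟨k, rfl | rfl | rfl | rfl⟩ | ⟨-, hv⟩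
    · exact .inr (.inl (qLL k))
    · exact .inr (.inl (qLU k))
    · exact .inl (qSU k)
    · exact .inl (qSL k)
    · exact .inr (.inr hv)
  have him : ∀ v, form a v < 0 → v ∈ Δ := by
    intro v hv
    rw [hΔ, hΔim]
    refine .inr ⟨?_, hv.le⟩
    rintro rfl
    simp [form] at hv
  have hre {v : ℤ × ℤ} (h : v ∈ Δre) : v ∈ Δ := hΔ ▸ .inl h
  -- It remains to locate six vectors: the string members at `a - 2` and `a - 1` for both strings,
  -- and the sum `α + β`.
  suffices H : form a α = 1 ∧ form a β = 1 ∧ form a (α + β) = a ∧ -(α + β) ∈ Δre ∧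
      β - (a - 2) • α ∈ Δre ∧ β - (a - 1) • α ∈ Δre ∧
      α - (a - 2) • β ∈ Δre ∧ α - (a - 1) • β ∈ Δre by
    obtain ⟨qα, qβ, qs, ms, m1, m2, m3, m4⟩ := H
    have qs' : form a (β + α) = a := by rw [add_comm, qs]
    obtain ⟨s1, s2⟩ := string_of_form ha hval him qα qβ qs (hre m1) (hre m2)
    obtain ⟨s3, s4⟩ := string_of_form ha hval him qβ qα qs' (hre m3) (hre m4)
    obtain ⟨t1, t2⟩ := third_root ha hval qα qβ qs
    obtain ⟨t3, t4⟩ := third_root ha hval qβ qα qs'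
    rw [add_comm β α] at t3 t4
    subst hc
    exact ⟨ms, s1, s2, s3, s4, t1, t2, t3, t4⟩
  -- The recurrences around `j` reduce each membership to a polynomial identity in two terms.
  have g0 : γ j = η (j - 1) - γ (j - 1) := hγ j
  have e0 : η j = a * γ j - η (j - 1) := hη j
  have g1 := hγ' j
  have e1 := hη' j
  have g2 := hγ' (j + 1)
  have e2 := hη' (j + 1)
  have g3 := hγ' (j + 1 + 1)
  have e3 := hη' (j + 1 + 1)
  rcases hpair with ⟨rfl, rfl⟩ | ⟨rfl, rfl⟩
  · have hs : αSU j + αSU (j + 1) = αLU j := by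
      simp only [hSU, hLU, Prod.mk_add_mk, Prod.mk.injEq]
      constructor <;> linarith
    refine ⟨qSU _, qSU _, hs ▸ qLU j, hs ▸ mLU j, ?_, ?_, ?_, ?_⟩
    · convert mSU (j - 1) using 1
      ext <;> simp [hSU, e1, g1, e0, g0] <;> ring
    · convert mLU (j - 1) using 1
      ext <;> simp [hSU, hLU, e1, g1, e0, g0] <;> ring
    · convert mSU (j + 1 + 1) using 1
      ext <;> simp [hSU, e2, g2, e1, g1] <;> ring
    · convert mLU (j + 1) using 1
      ext <;> simp [hSU, hLU, g2, e1, g1] <;> ring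
  · have hs : αSL j + αSL (j + 1) = αLL (j + 1) := by
      simp only [hSL, hLL, Prod.mk_add_mk, Prod.mk.injEq]
      constructor <;> linarith
    refine ⟨qSL _, qSL _, hs ▸ qLL (j + 1), hs ▸ mLL (j + 1), ?_, ?_, ?_, ?_⟩
    · convert mSL (j - 1) using 1
      ext <;> simp [hSL, g2, e1, g1, e0, g0] <;> ring
    · convert mLL j using 1
      ext <;> simp [hSL, hLL, g2, e1, g1, e0, g0] <;> ring
    · convert mSL (j + 1 + 1) using 1
      ext <;> simp [hSL, g3, e2, g2, e1, g1] <;> ring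
    · convert mLL (j + 1 + 1) using 1
      ext <;> simp [hSL, hLL, e2, g2, e1, g1] <;> ring
end

section
/- For all j, k ∈ ℤ: w^{LL}_k(α^{LL}_j) = −α^{LL}_{2k−j}, w^{SU}_k(α^{SU}_j) = −α^{SU}_{2k−j}, w^{LL}_k(α^{SU}_j) = −α^{SU}_{−2k−j−1}, and w^{SU}_k(α^{LL}_j) = −α^{LL}_{−2k−j−1}. -/
/-!
The sequences have the symmetries `γ (-j) = -γ j` and `η (-j) = -η (j - 1)` (`gamma_eta_neg`), from
which `w1 (αLL j) = -αLL (-j)` and `w1 (αSU j) = -αSU (-j - 1)`, and the same for `w2` with the roles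
of `αLL` and `αSU` exchanged. The product `w1 * w2` moves `αLL` one index up and `αSU` one index down,
and `w2 * w1` does the opposite, so the power with exponent `2 * k` shifts the index by `2 * k` or
`-2 * k` (`zpow_shift`). Composing the two gives all four formulas.
-/

/-- The reflection symmetry of the two sequences. -/
lemma gamma_eta_neg (c : ℤ) (γ η : ℤ → ℤ) (hγ0 : γ 0 = 0) (hη0 : η 0 = 1)
    (hγ : ∀ j : ℤ, γ j = η (j - 1) - γ (j - 1))
    (hη : ∀ j : ℤ, η j = c * γ j - η (j - 1)) (j : ℤ) :
    γ (-j) = -γ j ∧ η (-j) = -η (j - 1) := by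
  induction j using Int.induction_on with
  | zero =>
    have h := hη 0
    rw [hγ0, hη0] at h
    simp only [neg_zero, hγ0, hη0, true_and]
    linarith
  | succ i ih =>
    obtain ⟨h1, h2⟩ := ih
    have e1 := hγ (-i)
    have e2 := hη (-i)
    have e3 := hγ (i + 1)
    have e4 := hη i
    rw [show (-(i : ℤ) - 1) = -(i + 1) by ring] at e1 e2
    rw [add_sub_cancel_right] at e3 ⊢
    rw [h1] at e1 e2
    constructor <;> linarith
  | pred i ih =>
    obtain ⟨h1, h2⟩ := ih
    rw [neg_neg] at h1 h2
    have e1 := hγ (i + 1)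
    have e2 := hη (i + 1)
    have e3 := hγ (-i)
    have e4 := hη (-i - 1)
    rw [add_sub_cancel_right] at e1 e2
    rw [show -(-(i : ℤ) - 1) = i + 1 by ring]
    have h3 : γ (i + 1) = -γ (-i - 1) := by linarith
    rw [h3] at e2
    exact ⟨h3, by linarith⟩

/-- A permutation acting on a `ℤ`-indexed family by an index shift `d` has powers acting by multiples
of `d`. -/
lemma zpow_shift {X : Type*} (f : Equiv.Perm X) (s : ℤ → X) (d : ℤ)
    (h : ∀ j, f (s j) = s (j + d)) (n j : ℤ) : (f ^ n) (s j) = s (j + n * d) := by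
  induction n using Int.induction_on generalizing j with
  | zero => simp
  | succ i ih =>
    rw [zpow_add_one, Equiv.Perm.mul_apply, h, ih]
    congr 1; ring
  | pred i ih =>
    have h' : f⁻¹ (s j) = s (j - d) := by
      rw [Equiv.Perm.inv_eq_iff_eq, h, sub_add_cancel]
    rw [zpow_sub_one, Equiv.Perm.mul_apply, h', ih]
    congr 1; ring

/-- For all `j, k : ℤ`: `wLL k (αLL j) = -αLL (2k - j)`, `wSU k (αSU j) = -αSU (2k - j)`,
`wLL k (αSU j) = -αSU (-2k - j - 1)`, and `wSU k (αLL j) = -αLL (-2k - j - 1)`. -/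
theorem stmt11 (a b : ℤ) (hba : b ≤ a) (hb1 : 1 ≤ b) (hab : 4 ≤ a * b)
    (γ η : ℤ → ℤ) (hγ0 : γ 0 = 0) (hη0 : η 0 = 1)
    (hγ : ∀ j : ℤ, γ j = η (j - 1) - γ (j - 1))
    (hη : ∀ j : ℤ, η j = a * b * γ j - η (j - 1))
    (αLL αLU αSU αSL : ℤ → ℤ × ℤ)
    (hLL : ∀ j : ℤ, αLL j = (η j, a * γ j))
    (hLU : ∀ j : ℤ, αLU j = (η j, a * γ (j + 1)))
    (hSU : ∀ j : ℤ, αSU j = (b * γ j, η j))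
    (hSL : ∀ j : ℤ, αSL j = (b * γ (j + 1), η j))
    (w1 w2 : Equiv.Perm (ℤ × ℤ))
    (hw1 : ∀ v : ℤ × ℤ, w1 v = (b * v.2 - v.1, v.2))
    (hw2 : ∀ v : ℤ × ℤ, w2 v = (v.1, a * v.1 - v.2))
    (wLL wSU : ℤ → Equiv.Perm (ℤ × ℤ))
    (hwLL : ∀ k : ℤ, wLL k = (w1 * w2) ^ (2 * k) * w1)
    (hwSU : ∀ k : ℤ, wSU k = (w2 * w1) ^ (2 * k) * w2) :
    ∀ j k : ℤ,
      wLL k (αLL j) = -αLL (2 * k - j) ∧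
      wSU k (αSU j) = -αSU (2 * k - j) ∧
      wLL k (αSU j) = -αSU (-2 * k - j - 1) ∧
      wSU k (αLL j) = -αLL (-2 * k - j - 1) := by
  have hs := gamma_eta_neg (a * b) γ η hγ0 hη0 hγ hη
  have h1LL : ∀ j, w1 (αLL j) = -αLL (-j) := fun j => by
    have := hη j
    simp only [hLL, hw1, (hs j).1, (hs j).2, Prod.neg_mk, Prod.mk.injEq]
    constructor <;> linarith
  have h2SU : ∀ j, w2 (αSU j) = -αSU (-j) := fun j => by
    have := hη j
    simp only [hSU, hw2, (hs j).1, (hs j).2, Prod.neg_mk, Prod.mk.injEq]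
    constructor <;> linarith
  have hstep : ∀ j, γ (-j - 1) = γ j - η j ∧ η (-j - 1) = -η j := fun j => by
    have e := hs (j + 1)
    have e' := hγ (j + 1)
    rw [add_sub_cancel_right] at e e'
    rw [show -j - 1 = -(j + 1) by ring]
    exact ⟨by linarith, e.2⟩
  have h1SU : ∀ j, w1 (αSU j) = -αSU (-j - 1) := fun j => by
    simp only [hSU, hw1, (hstep j).1, (hstep j).2, Prod.neg_mk, Prod.mk.injEq]
    constructor <;> ring
  have h2LL : ∀ j, w2 (αLL j) = -αLL (-j - 1) := fun j => by
    simp only [hLL, hw2, (hstep j).1, (hstep j).2, Prod.neg_mk, Prod.mk.injEq]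
    constructor <;> ring
  have hw1n : ∀ v, w1 (-v) = -w1 v := fun v => by
    rw [hw1, hw1]
    ext <;> simp only [Prod.fst_neg, Prod.snd_neg] <;> ring
  have hw2n : ∀ v, w2 (-v) = -w2 v := fun v => by
    rw [hw2, hw2]
    ext <;> simp only [Prod.fst_neg, Prod.snd_neg] <;> ring
  have s12LL := zpow_shift (w1 * w2) (fun j => -αLL j) 1 fun j => by
    simp only [Equiv.Perm.mul_apply, hw2n, h1LL, h2LL, neg_neg]
    congr 2; ring
  have s21SU := zpow_shift (w2 * w1) (fun j => -αSU j) 1 fun j => by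
    simp only [Equiv.Perm.mul_apply, hw1n, h1SU, h2SU, neg_neg]
    congr 2; ring
  have s12SU := zpow_shift (w1 * w2) (fun j => -αSU j) (-1) fun j => by
    simp only [Equiv.Perm.mul_apply, hw2n, h1SU, h2SU, neg_neg]
    congr 2
  have s21LL := zpow_shift (w2 * w1) (fun j => -αLL j) (-1) fun j => by
    simp only [Equiv.Perm.mul_apply, hw1n, h1LL, h2LL, neg_neg]
    congr 2
  intro j k
  refine ⟨?_, ?_, ?_, ?_⟩
  · rw [hwLL, Equiv.Perm.mul_apply, h1LL, s12LL]
    congr 2; ring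
  · rw [hwSU, Equiv.Perm.mul_apply, h2SU, s21SU]
    congr 2; ring
  · rw [hwLL, Equiv.Perm.mul_apply, h1SU, s12SU]
    congr 2; ring
  · rw [hwSU, Equiv.Perm.mul_apply, h2LL, s21LL]
    congr 2; ring
end

section
/- Let I^L, I^S ⊆ ℤ and set Φ = {α^{LL}_j : j ∈ I^L} ∪ {−α^{LL}_j : j ∈ I^L} ∪ {α^{SU}_k : k ∈ I^S} ∪ {−α^{SU}_k : k ∈ I^S}. Assume Φ is closed under the reflections of its elements, i.e. w^{LL}_j(φ) ∈ Φ for every j ∈ I^L and φ ∈ Φ, and w^{SU}_k(φ) ∈ Φ for every k ∈ I^S and φ ∈ Φ. Then: (i) if j, k ∈ I^L then j + (k−j)·ℤ ⊆ I^L; (ii) if j, k ∈ I^S then j + (k−j)·ℤ ⊆ I^S; (iii) if j ∈ I^L and k ∈ I^S then j + (2j+2k+1)·ℤ ⊆ I^L and k + (2j+2k+1)·ℤ ⊆ I^S. -/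
/-!
The reflections permute the real roots, up to sign, by affine maps of their indices. Since
`γ (-j) = -γ j` and `η (-1 - j) = -η j` (`neg_index`), the simple reflections satisfy
`w1 αLL_j = -αLL_{-j}`, `w2 αLL_j = -αLL_{-1-j}`, `w2 αSU_j = -αSU_{-j}` and
`w1 αSU_j = -αSU_{-1-j}`. So `w1 w2` shifts the index of `αLL` by `1` and that of `αSU` by `-1`,
which gives
* `wLL_k αLL_j = -αLL_{2k-j}` and `wSU_k αSU_j = -αSU_{2k-j}`;
* `wSU_k αLL_j = -αLL_{-1-2k-j}` and `wLL_k αSU_j = -αSU_{-1-2k-j}`.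

An index can be read off from a root: `γ` and `η` are strictly increasing (`strictMono_gamma`,
`strictMono_eta`), so `αLL_m = ±αLL_i` forces `m = i`, and similarly for `αSU`. Moreover
`η i ^ 2 ≡ 1` modulo `a * b` (`eta_invariant`), so `a ∤ η i` because `a ≥ 2`; comparing second
coordinates, `αLL_m` is never `±αSU_i`. Hence closure of `Φ` says that each of the index sets is closed under
`(j, k) ↦ 2k - j`, which yields (i) and (ii) by stepping along the progression
(`progression_mem`), and that `j ∈ IL`, `k ∈ IS` imply `j - (2j+2k+1) ∈ IL` and
`k - (2j+2k+1) ∈ IS`, so (iii) is (i) and (ii) applied to these pairs.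
-/

lemma neg_index {c : ℤ} {γ η : ℤ → ℤ} (hγ0 : γ 0 = 0) (hη0 : η 0 = 1)
    (hγ : ∀ j : ℤ, γ j = η (j - 1) - γ (j - 1))
    (hη : ∀ j : ℤ, η j = c * γ j - η (j - 1)) (j : ℤ) :
    γ (-j) = -γ j ∧ η (-1 - j) = -η j := by
  induction j using Int.induction_on with
  | zero =>
    have h := hη 0
    rw [hγ0, hη0] at h
    simp only [neg_zero, sub_zero, hγ0, hη0, true_and]
    rw [zero_sub] at h
    linarith
  | succ i ih =>
    obtain ⟨h1, h2⟩ := ih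
    have e1 := hγ (-i)
    have e2 := hη (-1 - i)
    have e3 := hγ (i + 1)
    have e4 := hη (i + 1)
    rw [show (-i - 1 : ℤ) = -1 - i by ring] at e1
    rw [show (i + 1 - 1 : ℤ) = i by ring] at e3 e4
    rw [show (-((i : ℤ) + 1)) = -1 - i by ring, show (-1 - ((i : ℤ) + 1)) = -1 - i - 1 by ring]
    have h3 : γ (-1 - i) = -γ (i + 1) := by linarith
    rw [h3] at e2
    exact ⟨h3, by linarith⟩
  | pred i ih =>
    obtain ⟨h1, h2⟩ := ih
    have e1 := hγ (-(-i) + 1)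
    have e2 := hη (-(-i) + 1)
    have e3 := hγ (-i)
    have e4 := hη (-i)
    rw [show (-(-i) + 1 - 1 : ℤ) = -(-i) by ring] at e1 e2
    rw [show (-1 - -i : ℤ) = -(-i) - 1 by ring] at h2
    have e5 := hγ (-(-i))
    have e6 := hη (-(-i))
    rw [show (-(-i - 1) : ℤ) = -(-i) + 1 by ring, show (-1 - (-i - 1) : ℤ) = -(-i) by ring]
    have h4 : η (-(-i)) = -η (-i - 1) := by rw [h1] at e6; linarith
    exact ⟨by linarith, h4⟩

lemma strictMono_gamma {c : ℤ} (hc : 4 ≤ c) {γ η : ℤ → ℤ} (hγ0 : γ 0 = 0) (hη0 : η 0 = 1)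
    (hγ : ∀ j : ℤ, γ j = η (j - 1) - γ (j - 1))
    (hη : ∀ j : ℤ, η j = c * γ j - η (j - 1)) : StrictMono γ := by
  -- `2 * γ n + 1 ≤ η n` is an equality for `c = 4`, where `γ n = n` and `η n = 2 * n + 1`.
  have key : ∀ n : ℕ, 0 ≤ γ n ∧ 2 * γ n + 1 ≤ η n := by
    intro n
    induction n with
    | zero => simp [hγ0, hη0]
    | succ n ih =>
      obtain ⟨h1, h2⟩ := ih
      have e1 := hγ (n + 1)
      have e2 := hη (n + 1)
      rw [show (n + 1 - 1 : ℤ) = n by ring] at e1 e2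
      push_cast
      refine ⟨by linarith, ?_⟩
      nlinarith
  have step : ∀ n : ℕ, γ n < γ (n + 1) := by
    intro n
    have e1 := hγ (n + 1)
    rw [show (n + 1 - 1 : ℤ) = n by ring] at e1
    have := key n
    linarith
  refine strictMono_int_of_lt_succ fun j => ?_
  rcases le_or_gt 0 j with h | h
  · lift j to ℕ using h
    exact step j
  · obtain ⟨n, hn⟩ := Int.eq_ofNat_of_zero_le (show 0 ≤ -1 - j by omega)
    have h1 := (neg_index hγ0 hη0 hγ hη n).1
    have h2 := (neg_index hγ0 hη0 hγ hη (n + 1)).1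
    rw [show -(n : ℤ) = j + 1 by omega] at h1
    rw [show -((n : ℤ) + 1) = j by omega] at h2
    have := step n
    linarith

lemma strictMono_eta {γ η : ℤ → ℤ} (hγ : ∀ j : ℤ, γ j = η (j - 1) - γ (j - 1))
    (hm : StrictMono γ) : StrictMono η := by
  have e : ∀ j, η j = γ j + γ (j + 1) := by
    intro j
    have := hγ (j + 1)
    rw [show j + 1 - 1 = j by ring] at this
    linarith
  intro i j hij
  rw [e, e]
  have h1 := hm hij
  have h2 := hm (show i + 1 < j + 1 by omega)
  linarith

/-- For `c = a * b` this evaluates the invariant form `a x² - a b x y + b y²` on the roots: it equals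
`a` on every `αLL_j` and `b` on every `αSU_j`. -/
lemma eta_invariant {c : ℤ} {γ η : ℤ → ℤ} (hγ0 : γ 0 = 0) (hη0 : η 0 = 1)
    (hγ : ∀ j : ℤ, γ j = η (j - 1) - γ (j - 1))
    (hη : ∀ j : ℤ, η j = c * γ j - η (j - 1)) (j : ℤ) :
    η j ^ 2 - c * η j * γ j + c * γ j ^ 2 = 1 := by
  have step : ∀ j, η j ^ 2 - c * η j * γ j + c * γ j ^ 2 =
      η (j - 1) ^ 2 - c * η (j - 1) * γ (j - 1) + c * γ (j - 1) ^ 2 := by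
    intro j
    rw [hη j, hγ j]
    ring
  induction j using Int.induction_on with
  | zero => simp [hγ0, hη0]
  | succ i ih =>
    rw [step, show (i + 1 - 1 : ℤ) = i by ring, ih]
  | pred i ih => rw [← step, ih]

lemma not_dvd_eta {c d : ℤ} (hd : 2 ≤ d) (hdc : d ∣ c) {γ η : ℤ → ℤ} (hγ0 : γ 0 = 0)
    (hη0 : η 0 = 1) (hγ : ∀ j : ℤ, γ j = η (j - 1) - γ (j - 1))
    (hη : ∀ j : ℤ, η j = c * γ j - η (j - 1)) (j : ℤ) : ¬ d ∣ η j := by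
  rintro ⟨y, hy⟩
  obtain ⟨z, hz⟩ := hdc
  have h := eta_invariant hγ0 hη0 hγ hη j
  have : d ∣ 1 := ⟨η j * y - z * η j * γ j + z * γ j ^ 2, by
    rw [← h, hz]
    linear_combination η j * hy⟩
  have := Int.le_of_dvd one_pos this
  omega

/-- The pairs `(γ j, η j)` are distinct even up to sign. -/
lemma index_eq {c : ℤ} (hc : 4 ≤ c) {γ η : ℤ → ℤ} (hγ0 : γ 0 = 0) (hη0 : η 0 = 1)
    (hγ : ∀ j : ℤ, γ j = η (j - 1) - γ (j - 1))
    (hη : ∀ j : ℤ, η j = c * γ j - η (j - 1)) {m i : ℤ}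
    (h : (γ m = γ i ∧ η m = η i) ∨ (γ m = -γ i ∧ η m = -η i)) : m = i := by
  have hm := strictMono_gamma hc hγ0 hη0 hγ hη
  rcases h with ⟨h, -⟩ | ⟨h1, h2⟩
  · exact hm.injective h
  · -- Equality up to the sign `-1` would give both `m = -i` and `m = -1 - i`.
    obtain ⟨n1, n2⟩ := neg_index hγ0 hη0 hγ hη i
    have e1 := hm.injective (h1.trans n1.symm)
    have e2 := (strictMono_eta hγ hm).injective (h2.trans n2.symm)
    omega

lemma perm_zpow_shift {X : Type*} (p : Equiv.Perm X) (f : ℤ → X) (c : ℤ)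
    (h : ∀ j, p (f j) = f (j + c)) (n j : ℤ) : (p ^ n) (f j) = f (j + n * c) := by
  induction n using Int.induction_on generalizing j with
  | zero => simp
  | succ i ih =>
    rw [zpow_add_one, Equiv.Perm.mul_apply, h, ih]
    congr 1; ring
  | pred i ih =>
    rw [zpow_sub_one, Equiv.Perm.mul_apply, show f j = p (f (j - c)) by rw [h]; congr 1; ring,
      Equiv.Perm.inv_def, Equiv.symm_apply_apply, ih]
    congr 1; ring

lemma progression_mem {I : Set ℤ} (h : ∀ j ∈ I, ∀ k ∈ I, 2 * k - j ∈ I) (j : ℤ) (hj : j ∈ I)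
    (k : ℤ) (hk : k ∈ I) (n : ℤ) : j + n * (k - j) ∈ I := by
  -- Two consecutive terms of the progression give the next one in either direction.
  have : j + n * (k - j) ∈ I ∧ j + (n + 1) * (k - j) ∈ I := by
    induction n using Int.induction_on with
    | zero => simp [hj, hk]
    | succ i ih =>
      refine ⟨ih.2, ?_⟩
      have := h _ ih.1 _ ih.2
      convert this using 1; ring
    | pred i ih =>
      refine ⟨?_, by convert ih.1 using 1; ring⟩
      have := h _ ih.2 _ ih.1
      convert this using 1; ring
  exact this.1


/-- If `Φ = {±αLL j : j ∈ IL} ∪ {±αSU k : k ∈ IS}` is closed under the reflections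
`wLL j` for `j ∈ IL` and `wSU k` for `k ∈ IS`, then: (i) `j, k ∈ IL` implies
`j + (k-j)ℤ ⊆ IL`; (ii) `j, k ∈ IS` implies `j + (k-j)ℤ ⊆ IS`; (iii) `j ∈ IL`, `k ∈ IS`
implies `j + (2j+2k+1)ℤ ⊆ IL` and `k + (2j+2k+1)ℤ ⊆ IS`. -/
theorem stmt12 (a b : ℤ) (hba : b ≤ a) (hb1 : 1 ≤ b) (hab : 4 ≤ a * b)
    (γ η : ℤ → ℤ) (hγ0 : γ 0 = 0) (hη0 : η 0 = 1)
    (hγ : ∀ j : ℤ, γ j = η (j - 1) - γ (j - 1))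
    (hη : ∀ j : ℤ, η j = a * b * γ j - η (j - 1))
    (αLL αLU αSU αSL : ℤ → ℤ × ℤ)
    (hLL : ∀ j : ℤ, αLL j = (η j, a * γ j))
    (hLU : ∀ j : ℤ, αLU j = (η j, a * γ (j + 1)))
    (hSU : ∀ j : ℤ, αSU j = (b * γ j, η j))
    (hSL : ∀ j : ℤ, αSL j = (b * γ (j + 1), η j))
    (w1 w2 : Equiv.Perm (ℤ × ℤ))
    (hw1 : ∀ v : ℤ × ℤ, w1 v = (b * v.2 - v.1, v.2))
    (hw2 : ∀ v : ℤ × ℤ, w2 v = (v.1, a * v.1 - v.2))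
    (wLL wSU : ℤ → Equiv.Perm (ℤ × ℤ))
    (hwLL : ∀ k : ℤ, wLL k = (w1 * w2) ^ (2 * k) * w1)
    (hwSU : ∀ k : ℤ, wSU k = (w2 * w1) ^ (2 * k) * w2)
    (IL IS : Set ℤ) (Φ : Set (ℤ × ℤ))
    (hΦ : Φ = {v | (∃ j ∈ IL, v = αLL j ∨ v = -αLL j) ∨ (∃ k ∈ IS, v = αSU k ∨ v = -αSU k)})
    (hcloL : ∀ j ∈ IL, ∀ φ ∈ Φ, wLL j φ ∈ Φ)
    (hcloS : ∀ k ∈ IS, ∀ φ ∈ Φ, wSU k φ ∈ Φ) :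
    (∀ j ∈ IL, ∀ k ∈ IL, ∀ n : ℤ, j + n * (k - j) ∈ IL) ∧
    (∀ j ∈ IS, ∀ k ∈ IS, ∀ n : ℤ, j + n * (k - j) ∈ IS) ∧
    (∀ j ∈ IL, ∀ k ∈ IS, ∀ n : ℤ,
      j + n * (2 * j + 2 * k + 1) ∈ IL ∧ k + n * (2 * j + 2 * k + 1) ∈ IS) := by
  have nI := neg_index hγ0 hη0 hγ hη
  have g1 : ∀ j, γ (j + 1) = η j - γ j := fun j => by
    have := hγ (j + 1)
    rwa [show j + 1 - 1 = j by ring] at this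
  have hη' : ∀ j, η (-j) = η j - a * b * γ j := fun j => by
    have e := (nI (j - 1)).2
    rw [show -1 - (j - 1) = -j by ring] at e
    linarith [hη j]
  have hγ' : ∀ j, γ (-1 - j) = γ j - η j := fun j => by
    have e := (nI (j + 1)).1
    rw [show -(j + 1) = -1 - j by ring] at e
    linarith [g1 j]
  have neg1 : ∀ v, w1 (-v) = -w1 v := fun v => by
    rw [hw1, hw1]; ext <;> simp; ring
  have neg2 : ∀ v, w2 (-v) = -w2 v := fun v => by
    rw [hw2, hw2]; ext <;> simp; ring
  have w1L : ∀ j, w1 (αLL j) = -αLL (-j) := fun j => by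
    rw [hw1, hLL, hLL, (nI j).1, hη']
    ext <;> simp; ring
  have w2L : ∀ j, w2 (αLL j) = -αLL (-1 - j) := fun j => by
    rw [hw2, hLL, hLL, (nI j).2, hγ']
    ext <;> simp; ring
  have w2S : ∀ j, w2 (αSU j) = -αSU (-j) := fun j => by
    rw [hw2, hSU, hSU, (nI j).1, hη']
    ext <;> simp; ring
  have w1S : ∀ j, w1 (αSU j) = -αSU (-1 - j) := fun j => by
    rw [hw1, hSU, hSU, (nI j).2, hγ']
    ext <;> simp; ring
  have LL : ∀ k j, wLL k (αLL j) = -αLL (2 * k - j) := fun k j => by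
    rw [hwLL, Equiv.Perm.mul_apply, w1L, perm_zpow_shift (w1 * w2) (fun i => -αLL i) 1]
    · congr 2; ring
    · intro i
      rw [Equiv.Perm.mul_apply, neg2, w2L, neg_neg, w1L]
      congr 2; ring
  have SS : ∀ k j, wSU k (αSU j) = -αSU (2 * k - j) := fun k j => by
    rw [hwSU, Equiv.Perm.mul_apply, w2S, perm_zpow_shift (w2 * w1) (fun i => -αSU i) 1]
    · congr 2; ring
    · intro i
      rw [Equiv.Perm.mul_apply, neg1, w1S, neg_neg, w2S]
      congr 2; ring
  have LS : ∀ k j, wLL k (αSU j) = -αSU (-1 - 2 * k - j) := fun k j => by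
    rw [hwLL, Equiv.Perm.mul_apply, w1S, perm_zpow_shift (w1 * w2) (fun i => -αSU i) (-1)]
    · congr 2; ring
    · intro i
      rw [Equiv.Perm.mul_apply, neg2, w2S, neg_neg, w1S]
      congr 2; ring
  have SL : ∀ k j, wSU k (αLL j) = -αLL (-1 - 2 * k - j) := fun k j => by
    rw [hwSU, Equiv.Perm.mul_apply, w2L, perm_zpow_shift (w2 * w1) (fun i => -αLL i) (-1)]
    · congr 2; ring
    · intro i
      rw [Equiv.Perm.mul_apply, neg1, w1L, neg_neg, w2L]
      congr 2; ring
  have ha2 : 2 ≤ a := by nlinarith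
  have ha0 : a ≠ 0 := by omega
  have hb0 : b ≠ 0 := by omega
  -- `a` divides the second coordinate of `αLL m` but not that of `αSU i`; as `2 ≤ a`, this
  -- separates the two families.
  have disj : ∀ m i, αLL m ≠ αSU i ∧ αLL m ≠ -αSU i := fun m i => by
    have hn := not_dvd_eta ha2 (Dvd.intro b rfl) hγ0 hη0 hγ hη i
    rw [hLL, hSU]
    refine ⟨fun h => hn ⟨γ m, ?_⟩, fun h => hn ⟨-γ m, ?_⟩⟩
    · simpa using (congrArg Prod.snd h).symm
    · have := congrArg Prod.snd h
      simp at this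
      linarith
  have memL : ∀ m, -αLL m ∈ Φ → m ∈ IL := fun m h => by
    rw [hΦ] at h
    rcases h with ⟨i, hi, h⟩ | ⟨i, hi, h⟩
    · suffices m = i by rwa [this]
      apply index_eq hab hγ0 hη0 hγ hη
      rw [neg_eq_iff_eq_neg, neg_inj, hLL, hLL, or_comm] at h
      refine h.imp (fun h => ?_) fun h => ?_
      · simp [ha0] at h; tauto
      · simp [← mul_neg, ha0] at h; tauto
    · rw [neg_eq_iff_eq_neg, neg_inj] at h
      have := disj m i
      tauto
  have memS : ∀ m, -αSU m ∈ Φ → m ∈ IS := fun m h => by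
    rw [hΦ] at h
    rcases h with ⟨i, hi, h⟩ | ⟨i, hi, h⟩
    · have := disj i m
      rw [neg_inj, eq_comm, eq_comm (a := αSU m)] at h
      tauto
    · suffices m = i by rwa [this]
      apply index_eq hab hγ0 hη0 hγ hη
      rw [neg_eq_iff_eq_neg, neg_inj, hSU, hSU, or_comm] at h
      refine h.imp (fun h => ?_) fun h => ?_
      · simp [hb0] at h; tauto
      · simp [← mul_neg, hb0] at h; tauto
  have inL : ∀ j ∈ IL, αLL j ∈ Φ := fun j hj => by
    rw [hΦ]; exact Or.inl ⟨j, hj, Or.inl rfl⟩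
  have inS : ∀ j ∈ IS, αSU j ∈ Φ := fun j hj => by
    rw [hΦ]; exact Or.inr ⟨j, hj, Or.inl rfl⟩
  have P1 := progression_mem (I := IL) fun j hj k hk =>
    memL _ (LL k j ▸ hcloL k hk _ (inL j hj))
  have P2 := progression_mem (I := IS) fun j hj k hk =>
    memS _ (SS k j ▸ hcloS k hk _ (inS j hj))
  refine ⟨P1, P2, fun j hj k hk n => ⟨?_, ?_⟩⟩
  · have h := P1 j hj _ (memL _ (SL k j ▸ hcloS k hk _ (inL j hj))) (-n)
    convert h using 1; ring
  · have h := P2 k hk _ (memS _ (LS j k ▸ hcloL j hj _ (inS k hk))) (-n)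
    convert h using 1; ring
end

section
/- Suppose I^L, I^S ⊆ ℤ satisfy the following closure properties: for all j, k ∈ I^L, j + (k−j)·ℤ ⊆ I^L; for all j, k ∈ I^S, j + (k−j)·ℤ ⊆ I^S; and for all j ∈ I^L and k ∈ I^S, j + (2j+2k+1)·ℤ ⊆ I^L and k + (2j+2k+1)·ℤ ⊆ I^S. Then: (i) if I^S = ∅ and I^L ≠ ∅, then I^L = {r + n·d : n ∈ ℤ} for some integers r and d ≥ 0; (ii) if I^L = ∅ and I^S ≠ ∅, then I^S = {r + n·d : n ∈ ℤ} for some integers r and d ≥ 0; (iii) if I^L ≠ ∅ and I^S ≠ ∅, then there exist integers d ≥ 0 and r with −d ≤ r ≤ d such that I^L = r + (2d+1)·ℤ and I^S = (d−r) + (2d+1)·ℤ. -/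
/-!
A nonempty set of integers closed under `j + n * (k - j)` contains the whole progression spanned
by two of its points at minimal positive distance, and any further point would lie too close to
one of the terms; hence the set is a progression (`exists_progression`). This gives the two
cases where one set is empty.

If `IL` has step `a` and `IS` has step `b`, the mixed closure property says that `a` and `b` divide
every odd number `2 * j + 2 * k + 1`, `j ∈ IL`, `k ∈ IS`. So both steps are odd, and varying `k`
by `b` gives `a ∣ 2 * b`, so `a ∣ b`; by symmetry `a = b = 2 * d + 1`. Divisibility of
`2 * j + 2 * k + 1` by `2 * d + 1` then says exactly `k ≡ d - j` modulo `2 * d + 1`, and `r` is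
the representative of `IL` of least absolute value.
-/

/-- A nonempty subset of `ℤ` containing the affine span of any two of its points is a residue
class. The modulus is `0` when the set is a single point. -/
theorem exists_progression (I : Set ℤ) (hI : ∀ j ∈ I, ∀ k ∈ I, ∀ n : ℤ, j + n * (k - j) ∈ I)
    (hne : I ≠ ∅) : ∃ r d : ℤ, 0 ≤ d ∧ ∀ x, x ∈ I ↔ d ∣ x - r := by
  classical
  obtain ⟨p, hp⟩ := Set.nonempty_iff_ne_empty.mpr hne
  by_cases h : ∃ m : ℕ, 0 < m ∧ ∃ j ∈ I, j + (m : ℤ) ∈ I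
  · obtain ⟨hm, r, hr, hrm⟩ := Nat.find_spec h
    have hmin := fun m => Nat.find_min (H := h) (m := m)
    set d := Nat.find h
    have hsub : ∀ n : ℤ, r + n * d ∈ I := fun n => by
      simpa using hI r hr _ hrm n
    refine ⟨r, d, by positivity, fun x => ⟨fun hx => ?_, ?_⟩⟩
    · -- The remainder of `x - r` is the distance from `x` to a term of the progression.
      have hd : (0 : ℤ) < d := by exact_mod_cast hm
      have h0 := Int.emod_nonneg (x - r) hd.ne'
      have h1 := Int.emod_lt_of_pos (x - r) hd
      have h2 := Int.emod_add_mul_ediv (x - r) d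
      by_contra hnd
      have h3 : (x - r) % d ≠ 0 := fun h => hnd (Int.dvd_of_emod_eq_zero h)
      refine hmin ((x - r) % d).toNat (by omega) ⟨by omega, _, hsub ((x - r) / d), ?_⟩
      rw [Int.toNat_of_nonneg h0]
      convert hx using 1
      linarith
    · rintro ⟨n, hn⟩
      have := hsub n
      rwa [mul_comm, ← hn, add_sub_cancel] at this
  · refine ⟨p, 0, le_rfl, fun x => ⟨fun hx => ?_, fun hx => ?_⟩⟩
    · rw [zero_dvd_iff]
      by_contra hxp
      rcases lt_or_gt_of_ne hxp with hlt | hlt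
      · exact h ⟨(p - x).toNat, by omega, x, hx, by
          rw [Int.toNat_of_nonneg (by omega), add_sub_cancel]; exact hp⟩
      · exact h ⟨(x - p).toNat, by omega, p, hp, by
          rw [Int.toNat_of_nonneg (by omega), add_sub_cancel]; exact hx⟩
    · rw [zero_dvd_iff, sub_eq_zero] at hx
      rwa [hx]

theorem eq_progression {I : Set ℤ} {r d : ℤ} (h : ∀ x, x ∈ I ↔ d ∣ x - r) :
    I = {x | ∃ n : ℤ, x = r + n * d} := by
  ext x
  rw [h, Set.mem_ofPred_eq]
  constructor
  · rintro ⟨n, hn⟩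
    exact ⟨n, by linarith⟩
  · rintro ⟨n, rfl⟩
    exact ⟨n, by ring⟩

/-- One of the two symmetric halves of the comparison of steps: if `a` divides the odd numbers `m`
and `m + 2 * b`, then `a` divides `b`. -/
theorem dvd_of_dvd_odd {a b m : ℤ} (hm : Odd m) (h1 : a ∣ m) (h2 : a ∣ m + 2 * b) : a ∣ b := by
  have ha : IsCoprime a 2 :=
    IsCoprime.of_isCoprime_of_dvd_left (Int.isCoprime_two_right.mpr hm) h1
  exact ha.dvd_of_dvd_mul_left ((dvd_add_right h1).mp h2)


/-- If `IL, IS ⊆ ℤ` satisfy the closure properties of Lemma 4.6, then each is an arithmetic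
progression; moreover if both are nonempty, `IL = r + (2d+1)ℤ` and `IS = (d-r) + (2d+1)ℤ`
for some `d ≥ 0` and `-d ≤ r ≤ d`. -/
theorem stmt13 (IL IS : Set ℤ)
    (hL : ∀ j ∈ IL, ∀ k ∈ IL, ∀ n : ℤ, j + n * (k - j) ∈ IL)
    (hS : ∀ j ∈ IS, ∀ k ∈ IS, ∀ n : ℤ, j + n * (k - j) ∈ IS)
    (hLS : ∀ j ∈ IL, ∀ k ∈ IS, ∀ n : ℤ,
      j + n * (2 * j + 2 * k + 1) ∈ IL ∧ k + n * (2 * j + 2 * k + 1) ∈ IS) :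
    (IS = ∅ → IL ≠ ∅ → ∃ r d : ℤ, 0 ≤ d ∧ IL = {x | ∃ n : ℤ, x = r + n * d}) ∧
    (IL = ∅ → IS ≠ ∅ → ∃ r d : ℤ, 0 ≤ d ∧ IS = {x | ∃ n : ℤ, x = r + n * d}) ∧
    (IL ≠ ∅ → IS ≠ ∅ → ∃ d r : ℤ, 0 ≤ d ∧ -d ≤ r ∧ r ≤ d ∧
      IL = {x | ∃ n : ℤ, x = r + n * (2 * d + 1)} ∧
      IS = {x | ∃ n : ℤ, x = (d - r) + n * (2 * d + 1)}) := by
  refine ⟨fun _ hne => ?_, fun _ hne => ?_, fun hLne hSne => ?_⟩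
  · obtain ⟨r, d, hd, h⟩ := exists_progression IL hL hne
    exact ⟨r, d, hd, eq_progression h⟩
  · obtain ⟨r, d, hd, h⟩ := exists_progression IS hS hne
    exact ⟨r, d, hd, eq_progression h⟩
  · obtain ⟨r, a, ha, hr⟩ := exists_progression IL hL hLne
    obtain ⟨s, b, hb, hs⟩ := exists_progression IS hS hSne
    have hrm : r ∈ IL := (hr r).mpr (by simp)
    have hsm : s ∈ IS := (hs s).mpr (by simp)
    have hra : r + a ∈ IL := (hr _).mpr (by simp)
    have hsb : s + b ∈ IS := (hs _).mpr (by simp)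
    have hdvd : ∀ j ∈ IL, ∀ k ∈ IS, a ∣ 2 * j + 2 * k + 1 ∧ b ∣ 2 * j + 2 * k + 1 := by
      intro j hj k hk
      obtain ⟨h1, h2⟩ := hLS j hj k hk 1
      have h3 := dvd_sub ((hr _).mp h1) ((hr _).mp hj)
      have h4 := dvd_sub ((hs _).mp h2) ((hs _).mp hk)
      simp only [sub_sub_sub_cancel_right, add_sub_cancel_left, one_mul] at h3 h4
      exact ⟨h3, h4⟩
    have hodd : Odd (2 * r + 2 * s + 1) := ⟨r + s, by ring⟩
    obtain ⟨h1, h2⟩ := hdvd r hrm s hsm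
    have hab : a ∣ b := dvd_of_dvd_odd hodd h1 (by
      convert (hdvd r hrm _ hsb).1 using 1; ring)
    have hba : b ∣ a := dvd_of_dvd_odd hodd h2 (by
      convert (hdvd _ hra s hsm).2 using 1; ring)
    obtain rfl : a = b := Int.dvd_antisymm ha hb hab hba
    obtain ⟨d, rfl⟩ : Odd a := by
      obtain ⟨c, hc⟩ := h1
      exact (Int.odd_mul.mp (hc ▸ hodd)).1
    have hd : 0 ≤ d := by omega
    have hpos : 0 < 2 * d + 1 := by omega
    -- `2 * (r + s - d) = (2 * r + 2 * s + 1) - (2 * d + 1)`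
    have hrs : 2 * d + 1 ∣ r + s - d :=
      dvd_of_dvd_odd (m := 2 * d + 1) ⟨d, rfl⟩ dvd_rfl (by convert h1 using 1; ring)
    -- Reducing `r + d` modulo `2 * d + 1` puts the representative of `IL` in `[-d, d]`.
    have h0 := Int.emod_nonneg (r + d) hpos.ne'
    have h3 := Int.emod_lt_of_pos (r + d) hpos
    have h4 : 2 * d + 1 ∣ r - ((r + d) % (2 * d + 1) - d) := by
      rw [sub_sub_eq_add_sub]
      exact Int.dvd_self_sub_emod
    set t := (r + d) % (2 * d + 1) - d
    refine ⟨d, t, hd, by omega, by omega, eq_progression fun x => ?_, eq_progression fun x => ?_⟩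
    · rw [hr, ← dvd_add_left h4, sub_add_sub_cancel]
    · rw [hs, ← dvd_add_left (dvd_sub hrs h4)]
      ring_nf
end

section
/- Define δ_m = η_m − η_{m−1} and ε_m = γ_{m+1} − γ_m for m ∈ ℤ. Then for every integer d ≥ 0 and every j ∈ ℤ: γ_d·δ_{j−d} = γ_j − γ_{j−2d}; η_d·ε_{j−d−1} = γ_j − γ_{j−2d−1}; η_d·δ_{j−d} = η_j − η_{j−2d−1}; and ab·γ_d·ε_{j−d} = η_j − η_{j−2d}. -/
/-!
Centering the identities at `m = j - d` (or `m = j - d - 1` for the second one) makes them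
symmetric: `γ d * δ m = γ (m+d) - γ (m-d)` and so on. In this form all four are proved
simultaneously by induction on `d`: the recursions `γ (d+1) = η d - γ d` and
`η (d+1) = ab * γ (d+1) - η d` express the left sides for `d+1` through earlier ones, and the same
recursions at the indices `m ± d` rearrange the right sides.
-/

/-- The four product identities in the form centered at `m`, for a natural number `d`. Here `c`
stands for `ab`. -/
theorem centered_identities (c : ℤ) (γ η : ℤ → ℤ) (hγ0 : γ 0 = 0) (hη0 : η 0 = 1)
    (hγ : ∀ j : ℤ, γ j = η (j - 1) - γ (j - 1))
    (hη : ∀ j : ℤ, η j = c * γ j - η (j - 1)) (m : ℤ) (d : ℕ) :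
    γ d * (η m - η (m - 1)) = γ (m + d) - γ (m - d) ∧
    η d * (γ (m + 1) - γ m) = γ (m + d + 1) - γ (m - d) ∧
    η d * (η m - η (m - 1)) = η (m + d) - η (m - d - 1) ∧
    c * γ d * (γ (m + 1) - γ m) = η (m + d) - η (m - d) := by
  induction d with
  | zero => simp [hγ0, hη0]
  | succ d ih =>
    obtain ⟨h1, h2, h3, h4⟩ := ih
    push_cast
    rw [show m + ((d : ℤ) + 1) = m + d + 1 by ring, show m - ((d : ℤ) + 1) = m - d - 1 by ring]
    have g1 := hγ (d + 1)
    have e1 := hη (d + 1)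
    have g2 := hγ (m + d + 1)
    have e2 := hη (m + d + 1)
    have g3 := hγ (m + d + 1 + 1)
    have g4 := hγ (m - d)
    have e4 := hη (m - d)
    have e5 := hη (m - d - 1)
    simp only [add_sub_cancel_right] at g1 e1 g2 e2 g3
    -- The identities for `γ (d+1)` come first, since `η (d+1)` is computed from `γ (d+1)`.
    have k1 : γ (d + 1) * (η m - η (m - 1)) = γ (m + d + 1) - γ (m - d - 1) := by
      rw [g1]; linear_combination h3 - h1 - g2 + g4
    have k4 : c * γ (d + 1) * (γ (m + 1) - γ m) = η (m + d + 1) - η (m - d - 1) := by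
      rw [g1]; linear_combination c * h2 - h4 - e2 + e4
    refine ⟨k1, ?_, ?_, k4⟩
    · rw [e1]; linear_combination k4 - h2 - g3 + g4
    · rw [e1]; linear_combination c * k1 - h3 - e2 + e5


/-- With `δ m = η m - η (m-1)` and `ε m = γ (m+1) - γ m`, for every `d ≥ 0` and `j : ℤ`:
`γ d * δ (j-d) = γ j - γ (j-2d)`, `η d * ε (j-d-1) = γ j - γ (j-2d-1)`,
`η d * δ (j-d) = η j - η (j-2d-1)`, and `ab * γ d * ε (j-d) = η j - η (j-2d)`. -/
theorem stmt14 (a b : ℤ) (hba : b ≤ a) (hb1 : 1 ≤ b) (hab : 4 ≤ a * b)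
    (γ η : ℤ → ℤ) (hγ0 : γ 0 = 0) (hη0 : η 0 = 1)
    (hγ : ∀ j : ℤ, γ j = η (j - 1) - γ (j - 1))
    (hη : ∀ j : ℤ, η j = a * b * γ j - η (j - 1))
    (δ ε : ℤ → ℤ)
    (hδ : ∀ m : ℤ, δ m = η m - η (m - 1))
    (hε : ∀ m : ℤ, ε m = γ (m + 1) - γ m) :
    ∀ d : ℤ, 0 ≤ d → ∀ j : ℤ,
      γ d * δ (j - d) = γ j - γ (j - 2 * d) ∧
      η d * ε (j - d - 1) = γ j - γ (j - 2 * d - 1) ∧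
      η d * δ (j - d) = η j - η (j - 2 * d - 1) ∧
      a * b * γ d * ε (j - d) = η j - η (j - 2 * d) := by
  intro d hd j
  lift d to ℕ using hd
  have key := centered_identities (a * b) γ η hγ0 hη0 hγ hη
  obtain ⟨h1, -, h3, h4⟩ := key (j - d) d
  obtain ⟨-, h2, -, -⟩ := key (j - d - 1) d
  rw [show j - (d : ℤ) + d = j by ring, show j - (d : ℤ) - d = j - 2 * d by ring] at h1 h3 h4
  rw [show j - (d : ℤ) - 1 + d + 1 = j by ring,
    show j - (d : ℤ) - 1 - d = j - 2 * d - 1 by ring] at h2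
  simp only [hδ, hε]
  exact ⟨h1, h2, h3, h4⟩
end

section
/- For every integer d ≥ 0 and every j ∈ ℤ: γ_d divides γ_j if and only if d divides j; and η_d divides γ_j if and only if 2d+1 divides j. -/
/-!
Eliminating `η` shows that `γ` is the Lucas sequence `g (n + 1) = t * g n - g (n - 1)`, `g 0 = 0`,
`g 1 = 1`, with `t = a * b - 2 ≥ 2`, while `η d = γ d + γ (d + 1)`.

The addition formula `g (i + n) = g (n + 1) * g i - g n * g (i - 1)` (`lucas_add`) and the
coprimality of consecutive terms (`lucas_coprime`) imply that, whenever `N ∣ g D`, the set of `j`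
with `N ∣ g j` is invariant under translation by `D` (`lucas_dvd_add_mul`). Since `g` is odd, every
`j` can then be reduced to some `k` with `0 ≤ 2 * k ≤ D`. As `g` is strictly increasing on the
naturals, if `g k < N` for all these `k`, then `N ∣ g k` only for `k = 0`; thus `N ∣ g j` exactly
when `D ∣ j` (`lucas_dvd_iff`).

The theorem is the case `N = γ d`, `D = d`, together with the case `N = η d`, `D = 2 * d + 1`, where
`γ (2 * d + 1) = γ (d + 1) ^ 2 - γ d ^ 2` is divisible by `γ d + γ (d + 1)`.
For `d = 0` the first claim says instead that `γ` vanishes only at `0`.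
-/

section Lucas

variable {t : ℤ} {g : ℤ → ℤ}

theorem lucas_add (h0 : g 0 = 0) (h1 : g 1 = 1)
    (hr : ∀ n, g (n + 1) = t * g n - g (n - 1)) (n : ℤ) :
    ∀ i, g (i + n) = g (n + 1) * g i - g n * g (i - 1) := by
  induction n using Int.induction_on with
  | zero => intro i; simp [h0, h1]
  | succ n ih =>
    intro i
    have e := ih (i + 1)
    have r1 := hr (n + 1)
    have r2 := hr i
    rw [add_sub_cancel_right] at e r1
    rw [show i + ((n : ℤ) + 1) = i + 1 + n by ring, e, r1, r2]
    ring
  | pred n ih =>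
    intro i
    have e := ih (i - 1)
    have r1 := hr (-n)
    have r2 := hr (i - 1)
    rw [sub_add_cancel] at r2
    rw [show i + (-(n : ℤ) - 1) = i - 1 + -n by ring, e, r1, sub_add_cancel, r2]
    ring

theorem lucas_neg (h0 : g 0 = 0) (h1 : g 1 = 1)
    (hr : ∀ n, g (n + 1) = t * g n - g (n - 1)) (n : ℕ) : g (-n) = -g n := by
  suffices h : g (-n) = -g n ∧ g (-n - 1) = -g (n + 1) from h.1
  induction n with
  | zero =>
    have := hr 0
    simp only [zero_add, zero_sub, h0, h1] at this
    simp only [Nat.cast_zero, neg_zero, zero_sub, zero_add, h0, h1, true_and]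
    linarith
  | succ n ih =>
    have r1 := hr (n + 1)
    have r2 := hr (-n - 1)
    rw [add_sub_cancel_right] at r1
    rw [sub_add_cancel] at r2
    push_cast
    rw [show -((n : ℤ) + 1) = -n - 1 by ring]
    refine ⟨ih.2, ?_⟩
    linear_combination r1 + r2 + t * ih.2 - ih.1

/-- Consecutive terms are coprime because `g n ^ 2 - t * g n * g (n + 1) + g (n + 1) ^ 2 = 1`
for every `n`. -/
theorem lucas_coprime (h0 : g 0 = 0) (h1 : g 1 = 1)
    (hr : ∀ n, g (n + 1) = t * g n - g (n - 1)) (n : ℤ) : IsCoprime (g n) (g (n + 1)) := by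
  have key : g n ^ 2 - t * g n * g (n + 1) + g (n + 1) ^ 2 = 1 := by
    induction n using Int.induction_on with
    | zero => simp [h0, h1]
    | succ n ih =>
      have r1 := hr (n + 1)
      rw [add_sub_cancel_right] at r1
      rw [r1]
      linear_combination ih
    | pred n ih =>
      have r1 := hr (-n)
      rw [r1] at ih
      rw [sub_add_cancel]
      linear_combination ih
  exact ⟨g n - t * g (n + 1), g (n + 1), by linear_combination key⟩

theorem lucas_dvd_add_mul (h0 : g 0 = 0) (h1 : g 1 = 1)
    (hr : ∀ n, g (n + 1) = t * g n - g (n - 1)) {N D : ℤ} (hN : N ∣ g D) (q j : ℤ) :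
    N ∣ g (j + D * q) ↔ N ∣ g j := by
  have hc : IsCoprime N (g (D + 1)) := (lucas_coprime h0 h1 hr D).of_isCoprime_of_dvd_left hN
  have step : ∀ i, N ∣ g (i + D) ↔ N ∣ g i := by
    intro i
    rw [lucas_add h0 h1 hr D i, dvd_sub_left (hN.mul_right _)]
    exact ⟨hc.dvd_of_dvd_mul_left, fun h => h.mul_left _⟩
  induction q using Int.induction_on with
  | zero => simp
  | succ n ih => rw [mul_add_one, ← add_assoc]; exact (step _).trans ih
  | pred n ih => rw [← step, show j + D * (-(n : ℤ) - 1) + D = j + D * -n by ring]; exact ih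

theorem lucas_strictMono (ht : 2 ≤ t) (h0 : g 0 = 0) (h1 : g 1 = 1)
    (hr : ∀ n, g (n + 1) = t * g n - g (n - 1)) : StrictMono fun n : ℕ => g n := by
  have key : ∀ n : ℕ, 0 ≤ g n ∧ g n < g (n + 1) := by
    intro n
    induction n with
    | zero => simp [h0, h1]
    | succ n ih =>
      have r1 := hr (n + 1)
      rw [add_sub_cancel_right] at r1
      push_cast
      refine ⟨by linarith, ?_⟩
      rw [r1]
      nlinarith
  exact strictMono_nat_of_lt_succ fun n => by simpa using (key n).2

theorem lucas_dvd_iff (ht : 2 ≤ t) (h0 : g 0 = 0) (h1 : g 1 = 1)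
    (hr : ∀ n, g (n + 1) = t * g n - g (n - 1)) {N D : ℤ} (hD : 0 < D) (hN : N ∣ g D)
    (hlt : ∀ k : ℕ, 2 * (k : ℤ) ≤ D → g k < N) (j : ℤ) : N ∣ g j ↔ D ∣ j := by
  constructor
  · intro h
    have small : ∀ k : ℕ, 2 * (k : ℤ) ≤ D → N ∣ g k → k = 0 := by
      intro k hk hd
      by_contra hk0
      have hpos := lucas_strictMono ht h0 h1 hr (Nat.pos_of_ne_zero hk0)
      simp only [Nat.cast_zero, h0] at hpos
      exact absurd (Int.le_of_dvd hpos hd) (not_le.2 (hlt k hk))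
    have hr0 := Int.emod_nonneg j hD.ne'
    have hr1 := Int.emod_lt_of_pos j hD
    rw [← Int.emod_add_mul_ediv j D, lucas_dvd_add_mul h0 h1 hr hN] at h
    apply Int.dvd_of_emod_eq_zero
    by_cases hc : 2 * (j % D) ≤ D
    · lift j % D to ℕ using hr0 with k
      simp [small k hc h]
    · -- The representative of `j` nearest to zero is `j % D - D = -k`; oddness applies.
      obtain ⟨k, hk⟩ := Int.eq_ofNat_of_zero_le (show 0 ≤ D - j % D by omega)
      rw [show j % D = -k + D * 1 by omega, lucas_dvd_add_mul h0 h1 hr hN,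
        lucas_neg h0 h1 hr, dvd_neg] at h
      have := small k (by omega) h
      omega
  · rintro ⟨q, rfl⟩
    have := lucas_dvd_add_mul h0 h1 hr hN q 0
    rw [zero_add] at this
    rw [this, h0]
    exact dvd_zero N

end Lucas

/-- For every `d ≥ 0` and `j : ℤ`: `γ d ∣ γ j ↔ d ∣ j` and `η d ∣ γ j ↔ (2d+1) ∣ j`. -/
theorem stmt16 (a b : ℤ) (hba : b ≤ a) (hb1 : 1 ≤ b) (hab : 4 ≤ a * b)
    (γ η : ℤ → ℤ) (hγ0 : γ 0 = 0) (hη0 : η 0 = 1)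
    (hγ : ∀ j : ℤ, γ j = η (j - 1) - γ (j - 1))
    (hη : ∀ j : ℤ, η j = a * b * γ j - η (j - 1)) :
    ∀ d : ℤ, 0 ≤ d → ∀ j : ℤ,
      (γ d ∣ γ j ↔ d ∣ j) ∧ (η d ∣ γ j ↔ (2 * d + 1) ∣ j) := by
  have hηγ : ∀ n, η n = γ n + γ (n + 1) := by
    intro n
    have := hγ (n + 1)
    rw [add_sub_cancel_right] at this
    linarith
  have h1 : γ 1 = 1 := by
    have := hηγ 0
    rw [zero_add] at this
    linarith
  have hr : ∀ n, γ (n + 1) = (a * b - 2) * γ n - γ (n - 1) := by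
    intro n
    linear_combination hη n - hηγ n + hγ n
  have ht : 2 ≤ a * b - 2 := by linarith
  have mono := lucas_strictMono ht hγ0 h1 hr
  intro d hd j
  lift d to ℕ using hd
  constructor
  · rcases Nat.eq_zero_or_pos d with rfl | hpos
    · -- `γ 0 = 0` divides `γ j` only if `γ j = 0`, which forces `j = 0` by monotonicity and oddness.
      rw [Nat.cast_zero, hγ0, zero_dvd_iff, zero_dvd_iff]
      refine ⟨fun h => ?_, fun h => h ▸ hγ0⟩
      obtain ⟨k, rfl | rfl⟩ := j.eq_nat_or_neg
      · have := mono.injective (a₁ := k) (a₂ := 0) (by simpa [hγ0] using h)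
        simp [this]
      · rw [lucas_neg hγ0 h1 hr, neg_eq_zero] at h
        have := mono.injective (a₁ := k) (a₂ := 0) (by simpa [hγ0] using h)
        simp [this]
    · exact lucas_dvd_iff ht hγ0 h1 hr (by omega) dvd_rfl
        (fun k hk => mono (show k < d by omega)) j
  · refine lucas_dvd_iff ht hγ0 h1 hr (by omega) ?_ (fun k hk => ?_) j
    · have := lucas_add hγ0 h1 hr d (d + 1)
      rw [add_sub_cancel_right] at this
      rw [show 2 * (d : ℤ) + 1 = d + 1 + d by ring, this, hηγ]
      exact ⟨γ (d + 1) - γ d, by ring⟩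
    · have hle : γ k ≤ γ d := mono.monotone (show k ≤ d by omega)
      have hpos : γ (0 : ℕ) < γ ((d + 1 : ℕ) : ℤ) := mono (Nat.succ_pos d)
      push_cast at hpos
      rw [hγ0] at hpos
      rw [hηγ]
      linarith
end

section
/- For every integer d ≥ 0 and every j ∈ ℤ: (i) η_d divides η_j if and only if j ≡ d (mod 2d+1); (ii) if ab > 4, then γ_d divides η_j if and only if d = 1; (iii) if ab = 4, then γ_d divides η_j if and only if d is odd, say d = 2e+1 with e ≥ 0 an integer, and j ≡ e (mod 2e+1). -/
/-!
Put `m = ab - 2 ≥ 2`. Both sequences satisfy the two-sided recurrence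
`f (k + 1) = m * f k - f (k - 1)`, and `η k = γ (k + 1) + γ k`. A solution of the recurrence that is
divisible by `n` at `-1` and at `0` is divisible by `n` everywhere (`dvd_of_recurrence`); applied to
suitable combinations of shifts and reflections of `η` this yields

* the antisymmetry `η (-1 - k) = -η k` (take `n = 0`);
* `η d ∣ η (k + (2d + 1)) - η k`, so that `η` has period `2d + 1` modulo `η d`;
* `γ d ∣ η (k + 2d) - η k`, so that `η` has period `2d` modulo `γ d`.

Together with antisymmetry, `η j` is congruent up to sign to some `η r` with `0 ≤ r ≤ d` (modulo
`η d`) or `0 ≤ r < d` (modulo `γ d`). Since both sequences are strictly increasing on the nonnegative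
integers (`strict_growth`), size decides divisibility. Modulo `η d` only `r = d` gives zero.
Modulo `γ d` with `m ≥ 3` and `d ≥ 2`, one has `0 < η r < γ d` for `r ≤ d - 2`, while
`η (d - 1) ≡ γ (d - 1)` with `0 < γ (d - 1) < γ d`, so no `η j` is divisible by `γ d`.
If `m = 2`, then `γ j = j` and `η j = 2 * j + 1`, and the claim is elementary arithmetic.
-/

lemma dvd_of_recurrence (m n : ℤ) (f : ℤ → ℤ) (hf : ∀ k, f (k + 1) = m * f k - f (k - 1))
    (h0 : n ∣ f 0) (h1 : n ∣ f (-1)) (k : ℤ) : n ∣ f k := by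
  have key : ∀ k : ℤ, n ∣ f k ∧ n ∣ f (k - 1) := by
    intro k
    induction k using Int.induction_on with
    | zero => exact ⟨h0, by simpa using h1⟩
    | succ i ih =>
      refine ⟨?_, by simpa using ih.1⟩
      rw [hf]
      exact dvd_sub (ih.1.mul_left m) ih.2
    | pred i ih =>
      refine ⟨ih.2, ?_⟩
      have h := hf (-(i : ℤ) - 1)
      rw [sub_add_cancel] at h
      rw [show f (-(i : ℤ) - 1 - 1) = m * f (-(i : ℤ) - 1) - f (-(i : ℤ)) by rw [h]; ring]
      exact dvd_sub (ih.2.mul_left m) ih.1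
  exact (key k).1

lemma strict_growth (m : ℤ) (hm : 2 ≤ m) (f : ℤ → ℤ)
    (hf : ∀ k, f (k + 1) = m * f k - f (k - 1)) (h0 : 0 ≤ f 0) (h1 : f 0 < f 1)
    (i j : ℤ) (hi : 0 ≤ i) (hij : i < j) : f i < f j := by
  have key : ∀ n : ℕ, 0 ≤ f n ∧ f n < f (n + 1) := by
    intro n
    induction n with
    | zero => simpa using ⟨h0, h1⟩
    | succ n ih =>
      obtain ⟨p, q⟩ := ih
      push_cast
      have h := hf ((n : ℤ) + 1)
      rw [add_sub_cancel_right] at h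
      refine ⟨by linarith, ?_⟩
      rw [h]
      nlinarith
  have mono : StrictMono fun n : ℕ => f n :=
    strictMono_nat_of_lt_succ fun n => by simpa using (key n).2
  lift i to ℕ using hi
  lift j to ℕ using by omega
  exact mono (by exact_mod_cast hij)

lemma dvd_iff_of_period (n P : ℤ) (f : ℤ → ℤ) (h : ∀ k, n ∣ f (k + P) - f k) (j : ℤ) :
    n ∣ f j ↔ n ∣ f (j % P) := by
  have key : ∀ q k : ℤ, n ∣ f (k + P * q) - f k := by
    intro q k
    induction q using Int.induction_on with
    | zero => simp
    | succ i ih =>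
      have := dvd_add (h (k + P * i)) ih
      rw [sub_add_sub_cancel] at this
      rwa [show k + P * ((i : ℤ) + 1) = k + P * i + P by ring]
    | pred i ih =>
      have := dvd_sub ih (h (k + P * (-(i : ℤ) - 1)))
      rw [show k + P * (-(i : ℤ) - 1) + P = k + P * -(i : ℤ) by ring] at this
      rwa [sub_sub_sub_cancel_left] at this
  have := key (j / P) (j % P)
  rw [Int.emod_add_mul_ediv] at this
  exact (dvd_iff_dvd_of_dvd_sub this)

lemma not_dvd_of_pos_of_lt {n x : ℤ} (h0 : 0 < x) (h1 : x < n) : ¬ n ∣ x := fun h =>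
  absurd (Int.le_of_dvd h0 h) (not_le.mpr h1)


/-- For every `d ≥ 0` and `j : ℤ`: (i) `η d ∣ η j ↔ j ≡ d (mod 2d+1)`;
(ii) if `ab > 4`, then `γ d ∣ η j ↔ d = 1`;
(iii) if `ab = 4`, then `γ d ∣ η j ↔ d = 2e+1` with `e ≥ 0` and `j ≡ e (mod 2e+1)`. -/
theorem stmt17 (a b : ℤ) (hba : b ≤ a) (hb1 : 1 ≤ b) (hab : 4 ≤ a * b)
    (γ η : ℤ → ℤ) (hγ0 : γ 0 = 0) (hη0 : η 0 = 1)
    (hγ : ∀ j : ℤ, γ j = η (j - 1) - γ (j - 1))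
    (hη : ∀ j : ℤ, η j = a * b * γ j - η (j - 1)) :
    ∀ d : ℤ, 0 ≤ d → ∀ j : ℤ,
      (η d ∣ η j ↔ j ≡ d [ZMOD 2 * d + 1]) ∧
      (4 < a * b → (γ d ∣ η j ↔ d = 1)) ∧
      (a * b = 4 → (γ d ∣ η j ↔
        ∃ e : ℤ, 0 ≤ e ∧ d = 2 * e + 1 ∧ j ≡ e [ZMOD 2 * e + 1])) := by
  obtain ⟨m, hm⟩ : ∃ m, m = a * b - 2 := ⟨_, rfl⟩
  have hab' : a * b = m + 2 := by linarith
  rw [hab'] at hab ⊢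
  simp only [hab'] at hη
  have hm2 : 2 ≤ m := by linarith
  have hsum : ∀ k, η k = γ (k + 1) + γ k := by
    intro k
    have := hγ (k + 1)
    rw [add_sub_cancel_right] at this
    linarith
  have rγ : ∀ k, γ (k + 1) = m * γ k - γ (k - 1) := by
    intro k
    have h1 := hsum k
    have h2 := hη k
    have h3 := hγ k
    linarith
  have rη : ∀ k, η (k + 1) = m * η k - η (k - 1) := by
    intro k
    have h1 := rγ (k + 1)
    have h2 := rγ k
    rw [add_sub_cancel_right] at h1
    have h3 := hsum (k + 1)
    have h4 := hsum (k - 1)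
    rw [sub_add_cancel] at h4
    rw [h3, h4, hsum k, h1]
    linarith
  have hη1 : η (-1) = -1 := by
    have := hη 0
    simp only [hγ0, hη0, zero_sub] at this
    linarith
  have hγ1 : γ 1 = 1 := by simpa [hη0, hγ0] using (hsum 0).symm
  have hηone : η 1 = m + 1 := by
    have := rη 0
    simp only [zero_add, zero_sub, hη0, hη1] at this
    linarith
  have anti : ∀ k, η (-1 - k) = -η k := by
    intro k
    have := dvd_of_recurrence m 0 (fun k => η (-1 - k) + η k) (fun k => by
      have h1 := rη k
      have h2 := rη (-1 - k)
      rw [show -1 - k + 1 = -1 - (k - 1) by ring, show -1 - k - 1 = -1 - (k + 1) by ring] at h2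
      linarith) (by simp [hη0, hη1]) (by simp [hη0, hη1]) k
    have := zero_dvd_iff.mp this
    linarith
  have gη := strict_growth m hm2 η rη (by simp [hη0]) (by rw [hη0, hηone]; linarith)
  have gγ := strict_growth m hm2 γ rγ (by simp [hγ0]) (by rw [hγ0, hγ1]; norm_num)
  have pos : ∀ k, 0 ≤ k → 0 < η k := by
    intro k hk
    rcases hk.eq_or_lt with rfl | hk
    · simp [hη0]
    · have := gη 0 k le_rfl hk
      linarith
  have perη : ∀ d k : ℤ, η d ∣ η (k + (2 * d + 1)) - η k := by
    intro d k
    have := dvd_of_recurrence m (η d) (fun k => η (k + d) - η (k - d - 1)) (fun k => by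
      have h1 := rη (k + d)
      have h2 := rη (k - d - 1)
      rw [show k + d + 1 = k + 1 + d by ring, show k + d - 1 = k - 1 + d by ring] at h1
      rw [show k - d - 1 + 1 = k + 1 - d - 1 by ring,
        show k - d - 1 - 1 = k - 1 - d - 1 by ring] at h2
      linarith)
      (by
        have h := anti d
        refine ⟨2, ?_⟩
        simp only [zero_add, zero_sub]
        rw [show -d - 1 = -1 - d by ring, h]
        ring)
      (by
        have h := anti (d + 1)
        have h1 := rη d
        refine ⟨m, ?_⟩
        rw [show -1 - d - 1 = -1 - (d + 1) by ring, h, show -1 + d = d - 1 by ring]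
        linarith) (k + d + 1)
    rwa [show k + d + 1 + d = k + (2 * d + 1) by ring,
      show k + d + 1 - d - 1 = k by ring] at this
  have perγ : ∀ d k : ℤ, γ d ∣ η (k + 2 * d) - η k := by
    intro d k
    have e : η d + η (d - 1) = γ d * (m + 2) := by
      have := hη d
      linarith
    have := dvd_of_recurrence m (γ d) (fun k => η (k + d) - η (k - d)) (fun k => by
      have h1 := rη (k + d)
      have h2 := rη (k - d)
      rw [show k + d + 1 = k + 1 + d by ring, show k + d - 1 = k - 1 + d by ring] at h1
      rw [show k - d + 1 = k + 1 - d by ring, show k - d - 1 = k - 1 - d by ring] at h2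
      linarith)
      (by
        have h := anti (d - 1)
        refine ⟨m + 2, ?_⟩
        simp only [zero_add, zero_sub]
        rw [show -d = -1 - (d - 1) by ring, h]
        linarith)
      (by
        have h := anti d
        refine ⟨m + 2, ?_⟩
        rw [h, show -1 + d = d - 1 by ring]
        linarith) (k + d)
    rwa [show k + d + d = k + 2 * d by ring, show k + d - d = k by ring] at this
  intro d hd j
  refine ⟨?_, ?_, ?_⟩
  · rw [dvd_iff_of_period _ _ _ (perη d) j, Int.ModEq,
      Int.emod_eq_of_lt hd (by linarith : d < 2 * d + 1)]
    have hr0 := Int.emod_nonneg j (by linarith : 2 * d + 1 ≠ 0)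
    have hr1 := Int.emod_lt_of_pos j (by linarith : 0 < 2 * d + 1)
    generalize j % (2 * d + 1) = r at hr0 hr1 ⊢
    refine ⟨fun h => ?_, fun h => h ▸ dvd_rfl⟩
    rcases lt_trichotomy r d with hlt | heq | hgt
    · exact absurd h (not_dvd_of_pos_of_lt (pos r hr0) (gη r d hr0 hlt))
    · exact heq
    -- Here `η r` is congruent to `η (r - (2d + 1)) = -η (2d - r)` modulo `η d`.
    · have h1 := perη d (r - (2 * d + 1))
      rw [sub_add_cancel, show r - (2 * d + 1) = -1 - (2 * d - r) by ring, anti] at h1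
      rw [dvd_iff_dvd_of_dvd_sub h1, dvd_neg] at h
      exact absurd h (not_dvd_of_pos_of_lt (pos _ (by linarith)) (gη _ d (by linarith) (by linarith)))
  · intro hm3
    refine ⟨fun h => ?_, fun h => by simp [h, hγ1]⟩
    by_contra hd1
    have main : ∀ r, 0 ≤ r → r < d → ¬ γ d ∣ η r := by
      intro r h0 h1
      have g := gγ r (r + 1) h0 (by linarith)
      rcases (show r + 2 ≤ d ∨ r = d - 1 by omega) with h2 | h2
      · apply not_dvd_of_pos_of_lt (pos r h0)
        have hr := rγ (r + 1)
        rw [add_sub_cancel_right] at hr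
        have hle : γ (r + 1 + 1) ≤ γ d := by
          rcases h2.eq_or_lt with h2 | h2
          · rw [← h2, show r + 1 + 1 = r + 2 by ring]
          · exact (gγ _ d (by linarith) (by linarith)).le
        have hp : 0 < γ (r + 1) := by
          have := gγ 0 (r + 1) le_rfl (by linarith)
          linarith
        have := hsum r
        nlinarith
      · have hs := hsum r
        rw [h2, sub_add_cancel] at hs
        rw [h2, hs, dvd_add_right dvd_rfl]
        apply not_dvd_of_pos_of_lt
        · have := gγ 0 (d - 1) le_rfl (by omega)
          linarith
        · exact gγ (d - 1) d (by omega) (by linarith)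
    rcases hd.eq_or_lt with rfl | hdpos
    -- As `γ 0 = 0`, this case says that `η` never vanishes.
    · rw [hγ0, zero_dvd_iff] at h
      rcases le_or_gt 0 j with hj | hj
      · linarith [pos j hj]
      · have h1 := anti j
        linarith [pos (-1 - j) (by omega)]
    rw [dvd_iff_of_period _ _ _ (perγ d) j] at h
    have hr0 := Int.emod_nonneg j (by linarith : 2 * d ≠ 0)
    have hr1 := Int.emod_lt_of_pos j (by linarith : 0 < 2 * d)
    generalize j % (2 * d) = r at hr0 hr1 h
    rcases lt_or_ge r d with hlt | hge
    · exact main r hr0 hlt h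
    -- Here `η r` is congruent to `η (r - 2d) = -η (2d - 1 - r)` modulo `γ d`.
    · have h1 := perγ d (r - 2 * d)
      rw [sub_add_cancel, show r - 2 * d = -1 - (2 * d - 1 - r) by ring, anti] at h1
      rw [dvd_iff_dvd_of_dvd_sub h1, dvd_neg] at h
      exact main _ (by omega) (by omega) h
  · intro hm4
    obtain rfl : m = 2 := by linarith
    have hγid : ∀ k, γ k = k := by
      intro k
      have := dvd_of_recurrence 2 0 (fun k => γ k - k) (fun k => by
        have := rγ k
        linarith) (by simp [hγ0]) (by
          have := hγ 0
          simp only [zero_sub, hγ0, hη1] at this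
          exact ⟨0, by linarith⟩) k
      have := zero_dvd_iff.mp this
      linarith
    rw [hsum, hγid, hγid, hγid]
    constructor
    · intro h
      obtain ⟨e, he⟩ : Odd d := by
        obtain ⟨c, hc⟩ := h
        exact (Int.odd_mul.mp (hc ▸ (⟨j, by ring⟩ : Odd (j + 1 + j)))).1
      refine ⟨e, by omega, he, ?_⟩
      rw [← he]
      -- `d` is odd and divides `2 * (e - j) = d - (2 * j + 1)`.
      have h2 : d ∣ 2 * (e - j) := by
        rw [show 2 * (e - j) = d - (j + 1 + j) by rw [he]; ring]
        exact dvd_sub dvd_rfl h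
      have hc : IsCoprime d 2 := ⟨1, -e, by rw [he]; ring⟩
      exact Int.modEq_iff_dvd.mpr (hc.dvd_of_dvd_mul_left h2)
    · rintro ⟨e, -, he, h⟩
      rw [← he] at h
      obtain ⟨c, hc⟩ := Int.modEq_iff_dvd.mp h
      exact ⟨1 - 2 * c, by linear_combination -he - 2 * hc⟩
end

section
/- Define δ_m = η_m − η_{m−1} and ε_m = γ_{m+1} − γ_m for m ∈ ℤ. If ab = 4, then δ_m = 2 and ε_m = 1 for every m ∈ ℤ. If ab > 4, then δ_1 = ab − 2 > 2 and δ_{d+1} > δ_d for every integer d ≥ 1, and ε_0 = 1 and ε_{d+1} > ε_d for every integer d ≥ 0; in particular the sequences (δ_d)_{d≥1} and (ε_d)_{d≥0} are strictly increasing and take infinitely many distinct values. -/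
/-!
Write `c = a * b`. Eliminating one sequence from the two coupled recursions shows that `γ` and `η`,
hence also their differences `δ` and `ε`, satisfy the same linear recursion
`f (m + 2) = (c - 2) * f (m + 1) - f m`.

If `c = 4`, this says that the second difference of `f` vanishes, so a solution with two equal
consecutive values is constant (`rec_const`). If `c > 4`, then
`f (m + 2) - f (m + 1) = (c - 4) * f (m + 1) + (f (m + 1) - f m)`, so a solution which is positive
and increases at one step keeps increasing from there on (`rec_strict`). The initial values are
`δ 0 = 2`, `δ 1 = c - 2`, and `ε 0 = 1`, `ε 1 = c - 3`.
-/

theorem rec_const (f : ℤ → ℤ) (v : ℤ)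
    (hf : ∀ m, f (m + 2) = 2 * f (m + 1) - f m) (h0 : f 0 = v) (h1 : f 1 = v) (m : ℤ) :
    f m = v := by
  have key : f m = v ∧ f (m + 1) = v := by
    induction m using Int.induction_on with
    | zero => exact ⟨h0, by simpa using h1⟩
    | succ i ih =>
      have h := hf i
      rw [show (i : ℤ) + 1 + 1 = i + 2 by ring]
      exact ⟨ih.2, by linarith [ih.1, ih.2]⟩
    | pred i ih =>
      have h := hf (-(i : ℤ) - 1)
      rw [show -(i : ℤ) - 1 + 2 = -i + 1 by ring, show -(i : ℤ) - 1 + 1 = -i by ring] at h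
      rw [show -(i : ℤ) - 1 + 1 = -i by ring]
      exact ⟨by linarith [ih.1, ih.2], ih.1⟩
  exact key.1

theorem rec_strict (f : ℤ → ℤ) (c s : ℤ) (hc : 4 < c)
    (hf : ∀ m, f (m + 2) = (c - 2) * f (m + 1) - f m) (h0 : 0 < f s) (h1 : f s < f (s + 1))
    (d : ℤ) (hd : s ≤ d) : f d < f (d + 1) := by
  have key : 0 < f d ∧ f d < f (d + 1) := by
    induction d, hd using Int.le_induction with
    | base => exact ⟨h0, h1⟩
    | succ n hn ih =>
      have h := hf n
      have hpos : 0 < f (n + 1) := ih.1.trans ih.2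
      rw [show n + 1 + 1 = n + 2 by ring]
      exact ⟨hpos, by nlinarith [ih.2, mul_pos (sub_pos.2 hc) hpos]⟩
  exact key.2

theorem infinite_values (f : ℤ → ℤ) (s : ℤ) (h : ∀ d, s ≤ d → f d < f (d + 1)) :
    Set.Infinite {x : ℤ | ∃ d : ℤ, s ≤ d ∧ f d = x} := by
  have hmono : StrictMono fun n : ℕ => f (s + n) :=
    strictMono_nat_of_lt_succ fun n => by
      have := h (s + n) (by omega)
      simpa [add_assoc] using this
  exact Set.infinite_of_injective_forall_mem hmono.injective
    fun n => ⟨s + n, by omega, rfl⟩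

/-- With `δ m = η m - η (m-1)` and `ε m = γ (m+1) - γ m`: if `ab = 4` then `δ m = 2` and
`ε m = 1` for all `m`; if `ab > 4` then `δ 1 = ab - 2 > 2`, `δ` is strictly increasing from
`d = 1` on, `ε 0 = 1`, `ε` is strictly increasing from `d = 0` on, and in particular each of
these sequences takes infinitely many distinct values. -/
theorem stmt18 (a b : ℤ) (hba : b ≤ a) (hb1 : 1 ≤ b) (hab : 4 ≤ a * b)
    (γ η : ℤ → ℤ) (hγ0 : γ 0 = 0) (hη0 : η 0 = 1)
    (hγ : ∀ j : ℤ, γ j = η (j - 1) - γ (j - 1))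
    (hη : ∀ j : ℤ, η j = a * b * γ j - η (j - 1))
    (δ ε : ℤ → ℤ)
    (hδ : ∀ m : ℤ, δ m = η m - η (m - 1))
    (hε : ∀ m : ℤ, ε m = γ (m + 1) - γ m) :
    (a * b = 4 → ∀ m : ℤ, δ m = 2 ∧ ε m = 1) ∧
    (4 < a * b →
      δ 1 = a * b - 2 ∧ 2 < δ 1 ∧
      (∀ d : ℤ, 1 ≤ d → δ d < δ (d + 1)) ∧
      ε 0 = 1 ∧
      (∀ d : ℤ, 0 ≤ d → ε d < ε (d + 1)) ∧
      Set.Infinite {x : ℤ | ∃ d : ℤ, 1 ≤ d ∧ δ d = x} ∧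
      Set.Infinite {x : ℤ | ∃ d : ℤ, 0 ≤ d ∧ ε d = x}) := by
  -- The two recursions at index `j + 1`, and the resulting second-order recursions.
  have hγ' : ∀ j, γ (j + 1) = η j - γ j := fun j => by simpa using hγ (j + 1)
  have hη' : ∀ j, η (j + 1) = a * b * γ (j + 1) - η j := fun j => by simpa using hη (j + 1)
  have hγ2 : ∀ j, γ (j + 2) = (a * b - 2) * γ (j + 1) - γ j := fun j => by
    have h := hγ' (j + 1)
    rw [show j + 1 + 1 = j + 2 by ring] at h
    linarith [hγ' j, hη' j]
  have hη2 : ∀ j, η (j + 2) = (a * b - 2) * η (j + 1) - η j := fun j => by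
    have h := hη' (j + 1)
    have h2 := hγ' (j + 1)
    rw [show j + 1 + 1 = j + 2 by ring] at h h2
    rw [h, h2]
    linarith [hη' j]
  have hδ2 : ∀ m, δ (m + 2) = (a * b - 2) * δ (m + 1) - δ m := fun m => by
    have h := hη2 (m - 1)
    have h' := hη2 m
    rw [show m - 1 + 2 = m + 1 by ring, show m - 1 + 1 = m by ring] at h
    rw [hδ, hδ, hδ, show m + 2 - 1 = m + 1 by ring, show m + 1 - 1 = m by ring]
    linarith
  have hε2 : ∀ m, ε (m + 2) = (a * b - 2) * ε (m + 1) - ε m := fun m => by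
    have h := hγ2 (m + 1)
    have h' := hγ2 m
    rw [show m + 1 + 2 = m + 2 + 1 by ring, show m + 1 + 1 = m + 2 by ring] at h
    rw [hε, hε, hε, show m + 1 + 1 = m + 2 by ring]
    linarith
  have hγ1 : γ 1 = 1 := by simpa [hγ0, hη0] using hγ' 0
  have hη1 : η 1 = a * b - 1 := by simpa [hγ1, hη0] using hη' 0
  have hδ0 : δ 0 = 2 := by
    have h := hη 0
    rw [hγ0, hη0] at h
    rw [hδ, hη0]
    linarith
  have hδ1 : δ 1 = a * b - 2 := by
    rw [hδ, hη1, sub_self, hη0]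
    ring
  have hε0 : ε 0 = 1 := by simp [hε, hγ0, hγ1]
  have hε1 : ε 1 = a * b - 3 := by
    have h := hγ2 0
    norm_num [hγ0, hγ1] at h
    rw [hε, hγ1, show (1 : ℤ) + 1 = 2 by norm_num, h]
    ring
  refine ⟨fun h4 m => ?_, fun h4 => ?_⟩
  · simp only [h4] at hδ2 hε2 hδ1 hε1
    norm_num at hδ2 hε2 hδ1 hε1
    exact ⟨rec_const δ 2 hδ2 hδ0 hδ1 m, rec_const ε 1 hε2 hε0 hε1 m⟩
  · have hδs : ∀ d : ℤ, 1 ≤ d → δ d < δ (d + 1) := fun d hd =>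
      rec_strict δ (a * b) 0 h4 hδ2 (by rw [hδ0]; norm_num)
        (by rw [zero_add, hδ0, hδ1]; linarith) d (by omega)
    have hεs : ∀ d : ℤ, 0 ≤ d → ε d < ε (d + 1) := fun d hd =>
      rec_strict ε (a * b) 0 h4 hε2 (by rw [hε0]; norm_num)
        (by rw [zero_add, hε0, hε1]; linarith) d hd
    exact ⟨hδ1, by rw [hδ1]; linarith, hδs, hε0, hεs, infinite_values δ 1 hδs,
      infinite_values ε 0 hεs⟩
end

section
/- Assume a = 4 and b = 1 (the twisted affine case A_2^{(2)} = H(4,1)). Then: (i) η_j = 2j+1 and γ_j = j for every j ∈ ℤ, so that α^{LL}_j = (2j+1, 4j), α^{LU}_j = (2j+1, 4j+4), α^{SU}_j = (j, 2j+1), and α^{SL}_j = (j+1, 2j+1); (ii) the imaginary roots Δ^im are exactly the nonzero integer multiples of (1,2); and (iii) for α, β, γ ∈ Δ^re, one has α + β + γ = 0 if and only if there exist j, k ∈ ℤ such that {α, β, γ} = {α^{SU}_j, α^{SU}_{2k+1−j}, −α^{LU}_k} or {α, β, γ} = {α^{SL}_j, α^{SL}_{2k+1−j}, −α^{LL}_{k+1}}.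 -/
/-!
With `a = 4`, `b = 1`, induction on `j` gives `γ j = j` and `η j = 2 j + 1`, and the imaginary
cone is cut out by `4 x² - 4 x y + y² = (2 x - y)² ≤ 0`, i.e. `y = 2 x`.

For the zero-sum triples, call a real root short or long according to whether it is one of the
`αSU, αSL` or one of the `αLU, αLL`. Modulo 2, short roots have odd second coordinate, and long
roots have odd first and even second coordinate; hence a zero-sum triple of real roots consists of
exactly two short roots and one long root. The functional `(x, y) ↦ y - 2 x` takes the values
`±1` on short roots and `±2` on long ones, so the two short roots lie on the same line and the long
one on the opposite line, which is one of the two listed families (`exists_of_short_short_long`).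

Conversely the three members of each listed set are pairwise distinct, so a triple with the same
underlying set is a permutation of them and has the same sum (`add_eq_of_triple_eq`), namely zero.
-/

/-- Short real roots of `H(4,1)`: the points `(x, 2x ± 1)`, in the parametrizations
`αSU j`, `αSL j`. -/
def IsShortRoot (v : ℤ × ℤ) : Prop :=
  ∃ j : ℤ, v = (j, 2 * j + 1) ∨ v = (j + 1, 2 * j + 1)

/-- Long real roots of `H(4,1)`: the points `(x, 2x ± 2)` with `x` odd, in the parametrizations
`αLL j`, `αLU j`. -/
def IsLongRoot (v : ℤ × ℤ) : Prop :=
  ∃ j : ℤ, v = (2 * j + 1, 4 * j) ∨ v = (2 * j + 1, 4 * j + 4)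

/-- The coordinate form of the two families of zero-sum triples, with the long root last. -/
def IsZeroTriple (u v w : ℤ × ℤ) : Prop :=
  ∃ j k : ℤ,
    (u = (j, 2 * j + 1) ∧ v = (2 * k + 1 - j, 2 * (2 * k + 1 - j) + 1) ∧
      w = -(2 * k + 1, 4 * k + 4)) ∨
    (u = (j + 1, 2 * j + 1) ∧ v = (2 * k + 1 - j + 1, 2 * (2 * k + 1 - j) + 1) ∧
      w = -(2 * (k + 1) + 1, 4 * (k + 1)))

theorem exists_of_short_short_long {u v w : ℤ × ℤ} (hu : IsShortRoot u) (hv : IsShortRoot v)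
    (hw : IsLongRoot w) (h : u + v + w = 0) : IsZeroTriple u v w := by
  obtain ⟨i, hu⟩ := hu
  obtain ⟨j, hv⟩ := hv
  obtain ⟨l, hw⟩ := hw
  -- Since `w = -αLU k` or `w = -αLL (k + 1)`, the index `k` is determined by the first
  -- coordinate of `w`: `2 l + 1 = -(2 k + 1)`, resp. `2 l + 1 = -(2 k + 3)`.
  rcases hu with rfl | rfl
  · refine ⟨i, -l - 1, Or.inl ?_⟩
    rcases hv with rfl | rfl <;> rcases hw with rfl | rfl <;>
      simp only [Prod.mk_add_mk, Prod.mk_eq_zero, Prod.neg_mk, Prod.mk.injEq,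
        true_and] at h ⊢ <;> omega
  · refine ⟨i, -l - 2, Or.inr ?_⟩
    rcases hv with rfl | rfl <;> rcases hw with rfl | rfl <;>
      simp only [Prod.mk_add_mk, Prod.mk_eq_zero, Prod.neg_mk, Prod.mk.injEq,
        true_and] at h ⊢ <;> omega

/-- By parity, a zero-sum triple of real roots contains exactly one long root; the three cases
are its possible positions. -/
theorem isZeroTriple_of_add_eq_zero {u v w : ℤ × ℤ} (hu : IsShortRoot u ∨ IsLongRoot u)
    (hv : IsShortRoot v ∨ IsLongRoot v) (hw : IsShortRoot w ∨ IsLongRoot w)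
    (h : u + v + w = 0) :
    IsZeroTriple u v w ∨ IsZeroTriple u w v ∨ IsZeroTriple v w u := by
  have short_odd : ∀ {p : ℤ × ℤ}, IsShortRoot p → p.2 % 2 = 1 := by
    rintro p ⟨j, rfl | rfl⟩ <;> dsimp only <;> omega
  have long_odd_even : ∀ {p : ℤ × ℤ}, IsLongRoot p → p.1 % 2 = 1 ∧ p.2 % 2 = 0 := by
    rintro p ⟨j, rfl | rfl⟩ <;> dsimp only <;> omega
  have h1 : u.1 + v.1 + w.1 = 0 := congrArg Prod.fst h
  have h2 : u.2 + v.2 + w.2 = 0 := congrArg Prod.snd h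
  rcases hu with hu | hu <;> rcases hv with hv | hv <;> rcases hw with hw | hw
  · have := short_odd hu; have := short_odd hv; have := short_odd hw; omega
  · exact Or.inl (exists_of_short_short_long hu hv hw h)
  · exact Or.inr (Or.inl (exists_of_short_short_long hu hw hv (by rw [← h]; abel)))
  · have := short_odd hu; have := long_odd_even hv; have := long_odd_even hw; omega
  · exact Or.inr (Or.inr (exists_of_short_short_long hv hw hu (by rw [← h]; abel)))
  · have := long_odd_even hu; have := short_odd hv; have := long_odd_even hw; omega
  · have := long_odd_even hu; have := long_odd_even hv; have := short_odd hw; omega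
  · have := long_odd_even hu; have := long_odd_even hv; have := long_odd_even hw; omega

theorem add_eq_of_triple_eq {M : Type*} [AddCommMonoid M] {x y z p q r : M}
    (h : ({x, y, z} : Set M) = {p, q, r}) (hpq : p ≠ q) (hpr : p ≠ r) (hqr : q ≠ r) :
    x + y + z = p + q + r := by
  have hp : p ∈ ({x, y, z} : Set M) := by rw [h]; simp
  have hq : q ∈ ({x, y, z} : Set M) := by rw [h]; simp
  have hr : r ∈ ({x, y, z} : Set M) := by rw [h]; simp
  simp only [Set.mem_insert_iff, Set.mem_singleton_iff] at hp hq hr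
  clear h
  rcases hp with rfl | rfl | rfl <;> rcases hq with rfl | rfl | rfl <;>
    rcases hr with rfl | rfl | rfl <;> first | contradiction | abel


/-- For `a = 4`, `b = 1` (type `A₂⁽²⁾ = H(4,1)`): (i) `η j = 2j+1` and `γ j = j`, so that
`αLL j = (2j+1, 4j)`, `αLU j = (2j+1, 4j+4)`, `αSU j = (j, 2j+1)`, `αSL j = (j+1, 2j+1)`;
(ii) the imaginary roots are exactly the nonzero integer multiples of `(1,2)`;
(iii) for real roots `α, β, c`, `α + β + c = 0` iff `{α, β, c}` is
`{αSU j, αSU (2k+1-j), -αLU k}` or `{αSL j, αSL (2k+1-j), -αLL (k+1)}` for some `j, k : ℤ`. -/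
theorem stmt19 (a b : ℤ) (ha : a = 4) (hb : b = 1)
    (γ η : ℤ → ℤ) (hγ0 : γ 0 = 0) (hη0 : η 0 = 1)
    (hγ : ∀ j : ℤ, γ j = η (j - 1) - γ (j - 1))
    (hη : ∀ j : ℤ, η j = a * b * γ j - η (j - 1))
    (αLL αLU αSU αSL : ℤ → ℤ × ℤ)
    (hLL : ∀ j : ℤ, αLL j = (η j, a * γ j))
    (hLU : ∀ j : ℤ, αLU j = (η j, a * γ (j + 1)))
    (hSU : ∀ j : ℤ, αSU j = (b * γ j, η j))
    (hSL : ∀ j : ℤ, αSL j = (b * γ (j + 1), η j))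
    (Δre : Set (ℤ × ℤ))
    (hΔre : Δre = {v | ∃ j : ℤ, v = αLL j ∨ v = αLU j ∨ v = αSU j ∨ v = αSL j})
    (Δim : Set (ℤ × ℤ))
    (hΔim : Δim = {v | v ≠ 0 ∧ a * v.1 ^ 2 - a * b * v.1 * v.2 + b * v.2 ^ 2 ≤ 0}) :
    (∀ j : ℤ, η j = 2 * j + 1 ∧ γ j = j ∧
      αLL j = (2 * j + 1, 4 * j) ∧ αLU j = (2 * j + 1, 4 * j + 4) ∧
      αSU j = (j, 2 * j + 1) ∧ αSL j = (j + 1, 2 * j + 1)) ∧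
    (Δim = {v | ∃ n : ℤ, n ≠ 0 ∧ v = (n, 2 * n)}) ∧
    (∀ α β c : ℤ × ℤ, α ∈ Δre → β ∈ Δre → c ∈ Δre →
      (α + β + c = 0 ↔
        ∃ j k : ℤ, ({α, β, c} : Set (ℤ × ℤ)) = {αSU j, αSU (2 * k + 1 - j), -αLU k} ∨
          ({α, β, c} : Set (ℤ × ℤ)) = {αSL j, αSL (2 * k + 1 - j), -αLL (k + 1)})) := by
  subst ha hb
  have hrec : ∀ j : ℤ, γ j = j ∧ η j = 2 * j + 1 := by
    intro j
    induction j using Int.induction_on with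
    | zero => simp [hγ0, hη0]
    | succ i ih =>
      have h1 := hγ (i + 1)
      have h2 := hη (i + 1)
      rw [add_sub_cancel_right] at h1 h2
      omega
    | pred i ih =>
      have h1 := hγ (-i)
      have h2 := hη (-i)
      omega
  have hLL' : ∀ j : ℤ, αLL j = (2 * j + 1, 4 * j) := fun j => by
    rw [hLL, (hrec j).1, (hrec j).2]
  have hLU' : ∀ j : ℤ, αLU j = (2 * j + 1, 4 * j + 4) := fun j => by
    rw [hLU, (hrec (j + 1)).1, (hrec j).2, mul_add, mul_one]
  have hSU' : ∀ j : ℤ, αSU j = (j, 2 * j + 1) := fun j => by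
    rw [hSU, (hrec j).1, (hrec j).2, one_mul]
  have hSL' : ∀ j : ℤ, αSL j = (j + 1, 2 * j + 1) := fun j => by
    rw [hSL, (hrec (j + 1)).1, (hrec j).2, one_mul]
  refine ⟨fun j => ⟨(hrec j).2, (hrec j).1, hLL' j, hLU' j, hSU' j, hSL' j⟩, ?_, ?_⟩
  · rw [hΔim]
    ext ⟨x, y⟩
    simp only [Set.mem_ofPred_eq, ne_eq, Prod.mk_eq_zero, Prod.mk.injEq]
    constructor
    · rintro ⟨h0, hle⟩
      have hsq : (2 * x - y) ^ 2 = 0 := le_antisymm (by linarith) (sq_nonneg _)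
      have hxy : 2 * x - y = 0 := pow_eq_zero_iff two_ne_zero |>.mp hsq
      exact ⟨x, by omega, rfl, by omega⟩
    · rintro ⟨n, hn, rfl, rfl⟩
      exact ⟨fun h => hn h.1, by linarith⟩
  · have hroot : ∀ v ∈ Δre, IsShortRoot v ∨ IsLongRoot v := by
      intro v hv
      rw [hΔre] at hv
      obtain ⟨j, h | h | h | h⟩ := hv
      · exact Or.inr ⟨j, Or.inl (h.trans (hLL' j))⟩
      · exact Or.inr ⟨j, Or.inr (h.trans (hLU' j))⟩
      · exact Or.inl ⟨j, Or.inl (h.trans (hSU' j))⟩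
      · exact Or.inl ⟨j, Or.inr (h.trans (hSL' j))⟩
    have htriple : ∀ u v w : ℤ × ℤ, IsZeroTriple u v w →
        ∃ j k : ℤ, ({u, v, w} : Set (ℤ × ℤ)) = {αSU j, αSU (2 * k + 1 - j), -αLU k} ∨
          ({u, v, w} : Set (ℤ × ℤ)) = {αSL j, αSL (2 * k + 1 - j), -αLL (k + 1)} := by
      rintro u v w ⟨j, k, ⟨rfl, rfl, rfl⟩ | ⟨rfl, rfl, rfl⟩⟩
      · exact ⟨j, k, Or.inl (by rw [hSU', hSU', hLU'])⟩
      · exact ⟨j, k, Or.inr (by rw [hSL', hSL', hLL'])⟩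
    intro α β c hα hβ hc
    constructor
    · intro h
      rcases isZeroTriple_of_add_eq_zero (hroot α hα) (hroot β hβ) (hroot c hc) h with h | h | h
      · exact htriple _ _ _ h
      · rw [Set.pair_comm β c]
        exact htriple _ _ _ h
      · rw [Set.insert_comm α β, Set.pair_comm α c]
        exact htriple _ _ _ h
    · -- The two short roots differ because their indices add up to an odd number; the long root
      -- differs from both by the parity of its second coordinate.
      rintro ⟨j, k, h | h⟩
      · rw [hSU', hSU', hLU'] at h
        rw [add_eq_of_triple_eq h]
        all_goals
          simp only [Prod.mk_add_mk, Prod.mk_eq_zero, Prod.neg_mk, ne_eq, Prod.mk.injEq]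
          omega
      · rw [hSL', hSL', hLL'] at h
        rw [add_eq_of_triple_eq h]
        all_goals
          simp only [Prod.mk_add_mk, Prod.mk_eq_zero, Prod.neg_mk, ne_eq, Prod.mk.injEq]
          omega
end
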